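/- Let k ≥ 1 and s ≥ 1 be integers. There exists a constant c_s = c(s,k) > 0 such that for all constants c₀, C₀, C > 0 and every T > 0 there exists a constant C̃_s > 0 depending only on s, k, T, c₀, C₀, C with the following property: for every ε > 0, every Schwartz-class solution u of the KdV equation on [0,T] and every Schwartz-class solution U on [0,T] of the equation ∂_t U + ∂_x^3 U + U^k ∂_x U = 0, whose initial data u₀ := u(0) ≠ 0 and U₀ := U(0) ≠ 0 satisfy T ≤ c_s · min{ ‖U₀‖_{H^{s+1}}^{-k}, ‖u₀‖_{H^{s+1}}^{-1} }, ‖u₀‖_{H^{s+1}} ≤ c₀ ε, ‖U₀‖_{H^{s+1}} ≤ C₀ ε, and ‖u₀ − U₀‖_{H^s} ≤ C·max{ε², ε^{k+1}}, one has sup_{t ∈ [0,T]} ‖u(t) − U(t)‖_{H^s} ≤ C̃_s·max{ε², ε^{k+1}}, and consequently sup_{t ∈ [0,T]} ‖u(t) − U(t)‖_{L^∞} ≤ C̃_s·max{ε², ε^{k+1}}. -/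

import Mathlib

open MeasureTheory Real

/-- The Sobolev `H^s` norm of a function `f : ℝ → ℝ`. -/
noncomputable def hNorm (s : ℕ) (f : ℝ → ℝ) : ℝ :=
  Real.sqrt (∑ n ∈ Finset.range (s + 1), ∫ x : ℝ, (iteratedDeriv n f x) ^ 2)

/-- The `L^∞` (sup) norm of `f : ℝ → ℝ`. -/
noncomputable def linfNorm (f : ℝ → ℝ) : ℝ := ⨆ x : ℝ, |f x|

/-- A Schwartz-class solution of `∂ₜU + ∂ₓ³U + F(U) ∂ₓU = 0` on `[0,T]`. -/
def IsSchwartzSolution (F : ℝ → ℝ) (T : ℝ) (U : ℝ → SchwartzMap ℝ ℝ) : Prop :=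
  ContDiff ℝ (⊤ : ℕ∞) (fun p : ℝ × ℝ => U p.1 p.2) ∧
  ∀ t ∈ Set.Icc (0 : ℝ) T, ∀ x : ℝ,
    deriv (fun τ : ℝ => U τ x) t + iteratedDeriv 3 (⇑(U t)) x
      + F (U t x) * deriv (⇑(U t)) x = 0

section PartA1
open Filter Topology Set

/-- Continuous square-integrable function with square of the `L²` norm at most `X`. -/
structure L2b (g : ℝ → ℝ) (X : ℝ) : Prop where
  cont : Continuous g
  int : Integrable (fun x => g x ^ 2)
  le : ∫ x, g x ^ 2 ≤ X

lemma L2b.mono {g : ℝ → ℝ} {X Y : ℝ} (h : L2b g X) (hXY : X ≤ Y) : L2b g Y :=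
  ⟨h.cont, h.int, h.le.trans hXY⟩

lemma L2b.nonneg {g : ℝ → ℝ} {X : ℝ} (h : L2b g X) : 0 ≤ X :=
  le_trans (integral_nonneg fun _ => sq_nonneg _) h.le

lemma L2b.of_sq_le {g k : ℝ → ℝ} {X : ℝ} (hg : Continuous g) (hk : Integrable k)
    (hle : ∀ x, g x ^ 2 ≤ k x) (hX : ∫ x, k x ≤ X) : L2b g X := by
  have hi : Integrable (fun x => g x ^ 2) := by
    refine hk.mono' (hg.pow 2).aestronglyMeasurable (Eventually.of_forall fun x => ?_)
    rw [Real.norm_eq_abs, abs_of_nonneg (sq_nonneg _)]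
    exact hle x
  exact ⟨hg, hi, (integral_mono hi hk hle).trans hX⟩

lemma L2b.add {g h : ℝ → ℝ} {X Y : ℝ} (hg : L2b g X) (hh : L2b h Y) :
    L2b (fun x => g x + h x) (2 * X + 2 * Y) := by
  refine L2b.of_sq_le (k := fun x => 2 * g x ^ 2 + 2 * h x ^ 2) (hg.cont.add hh.cont)
    ((hg.int.const_mul 2).add (hh.int.const_mul 2)) (fun x => ?_) ?_
  · nlinarith [sq_nonneg (g x - h x)]
  · rw [integral_add (hg.int.const_mul 2) (hh.int.const_mul 2), integral_const_mul,
      integral_const_mul]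
    linarith [hg.le, hh.le]

lemma L2b.bmul {b g : ℝ → ℝ} {X β : ℝ} (hb : Continuous b) (hβ : ∀ x, b x ^ 2 ≤ β)
    (hg : L2b g X) : L2b (fun x => b x * g x) (β * X) := by
  have h0 : 0 ≤ β := (sq_nonneg _).trans (hβ 0)
  refine L2b.of_sq_le (k := fun x => β * g x ^ 2) (hb.mul hg.cont)
    (hg.int.const_mul β) (fun x => ?_) ?_
  · rw [mul_pow]; exact mul_le_mul_of_nonneg_right (hβ x) (sq_nonneg _)
  · rw [integral_const_mul]; exact mul_le_mul_of_nonneg_left hg.le h0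

lemma L2b.cmul {g : ℝ → ℝ} {X : ℝ} (c : ℝ) (hg : L2b g X) :
    L2b (fun x => c * g x) (c ^ 2 * X) :=
  L2b.bmul continuous_const (fun _ => le_rfl) hg

lemma L2b.neg {g : ℝ → ℝ} {X : ℝ} (hg : L2b g X) : L2b (fun x => - g x) X := by
  have := hg.cmul (-1)
  simpa using this

lemma L2b.sub {g h : ℝ → ℝ} {X Y : ℝ} (hg : L2b g X) (hh : L2b h Y) :
    L2b (fun x => g x - h x) (2 * X + 2 * Y) := by
  simpa [sub_eq_add_neg] using hg.add hh.neg

lemma L2b.integrable_mul {g h : ℝ → ℝ} {X Y : ℝ} (hg : L2b g X) (hh : L2b h Y) :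
    Integrable (fun x => g x * h x) := by
  refine (hg.int.add hh.int).mono' (hg.cont.mul hh.cont).aestronglyMeasurable
    (Eventually.of_forall fun x => ?_)
  simp only [Pi.add_apply, Real.norm_eq_abs]
  rw [abs_le]; constructor <;> nlinarith [sq_nonneg (g x - h x), sq_nonneg (g x + h x), sq_nonneg (g x), sq_nonneg (h x)]

lemma L2b.mul_le {g h : ℝ → ℝ} {X Y : ℝ} (hg : L2b g X) (hh : L2b h Y) {l : ℝ} (hl : 0 < l) :
    ∫ x, |g x * h x| ≤ (l * X + Y / l) / 2 := by
  have h1 : ∫ x, |g x * h x| ≤ ∫ x, (l / 2 * g x ^ 2 + 1 / (2 * l) * h x ^ 2) := by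
    refine integral_mono (hg.integrable_mul hh).abs
      ((hg.int.const_mul _).add (hh.int.const_mul _)) (fun x => ?_)
    have e : l / 2 * g x ^ 2 + 1 / (2 * l) * h x ^ 2 = ((l * g x) ^ 2 + h x ^ 2) / (2 * l) := by
      field_simp
    simp only
    rw [e, le_div_iff₀ (by positivity)]
    have : |g x * h x| * (2 * l) = 2 * |l * g x * h x| := by
      rw [mul_assoc l, abs_mul l, abs_of_pos hl]; ring
    rw [this]
    rcases abs_cases (l * g x * h x) with h' | h' <;>
      nlinarith [sq_nonneg (l * g x - h x), sq_nonneg (l * g x + h x)]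
  refine h1.trans ?_
  rw [integral_add (hg.int.const_mul _) (hh.int.const_mul _), integral_const_mul,
      integral_const_mul]
  have e : (l * X + Y / l) / 2 = l / 2 * X + 1 / (2 * l) * Y := by field_simp
  rw [e]
  gcongr
  · exact hg.le
  · exact hh.le

lemma L2b.shift {g : ℝ → ℝ} {X : ℝ} (hg : L2b g X) (a : ℝ) :
    L2b (fun x => g (x + a)) X := by
  refine ⟨hg.cont.comp (continuous_id.add continuous_const), hg.int.comp_add_right a, ?_⟩
  rw [integral_add_right_eq_self (fun x => g x ^ 2)]
  exact hg.le

lemma sup_sq_le {g g' : ℝ → ℝ} {X Y : ℝ} (hd : ∀ x, HasDerivAt g (g' x) x)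
    (hg : L2b g X) (hg' : L2b g' Y) {l : ℝ} (hl : 0 < l) (x : ℝ) :
    g x ^ 2 ≤ l * X + Y / l := by
  have hder : ∀ y ∈ Iic x, HasDerivAt (fun y => g y ^ 2) (2 * (g y * g' y)) y := by
    intro y _
    have := (hd y).pow 2
    exact this.congr_deriv (by push_cast; ring)
  have hi : Integrable (fun y => 2 * (g y * g' y)) := (hg.integrable_mul hg').const_mul 2
  have ht := tendsto_zero_of_hasDerivAt_of_integrableOn_Iic hder hi.integrableOn hg.int.integrableOn
  have h1 := integral_Iic_of_hasDerivAt_of_tendsto' hder hi.integrableOn ht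
  rw [sub_zero] at h1
  rw [← h1]
  calc ∫ y in Iic x, 2 * (g y * g' y) ≤ ∫ y in Iic x, |2 * (g y * g' y)| :=
        integral_mono hi.integrableOn hi.abs.integrableOn (fun y => le_abs_self _)
    _ ≤ ∫ y, |2 * (g y * g' y)| :=
        setIntegral_le_integral hi.abs (Eventually.of_forall fun y => abs_nonneg _)
    _ = 2 * ∫ y, |g y * g' y| := by
        rw [← integral_const_mul]; congr 1; ext y; rw [abs_mul]; simp
    _ ≤ l * X + Y / l := by
        have := hg.mul_le hg' hl; linarith

lemma L2b.diffq {g g' : ℝ → ℝ} {X : ℝ} (hd : ∀ x, HasDerivAt g (g' x) x)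
    (hg' : L2b g' X) {h : ℝ} (hh : h ≠ 0) :
    L2b (fun x => (g (x + h) - g x) / h) X := by
  have hgc : Continuous g := continuous_iff_continuousAt.2 fun x => (hd x).continuousAt
  have hc : Continuous (fun x => (g (x + h) - g x) / h) :=
    ((hgc.comp (continuous_id.add continuous_const)).sub hgc).div_const h
  have hrep : ∀ x, (g (x + h) - g x) / h = ∫ θ in (0:ℝ)..1, g' (x + θ * h) := by
    intro x
    have hder : ∀ θ ∈ uIcc (0:ℝ) 1, HasDerivAt (fun θ : ℝ => g (x + θ * h) / h) (g' (x + θ * h)) θ := by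
      intro θ _
      have h1 : HasDerivAt (fun θ : ℝ => x + θ * h) h θ := by
        simpa using ((hasDerivAt_id θ).mul_const h).const_add x
      have h2 := ((hd (x + θ * h)).comp θ h1).div_const h
      exact h2.congr_deriv (mul_div_cancel_right₀ _ hh)
    have hc' : Continuous (fun θ : ℝ => g' (x + θ * h)) := hg'.cont.comp (by fun_prop)
    rw [intervalIntegral.integral_eq_sub_of_hasDerivAt hder (hc'.intervalIntegrable _ _)]
    simp; ring
  have hjen : ∀ x, ((g (x + h) - g x) / h) ^ 2 ≤ ∫ θ in (0:ℝ)..1, g' (x + θ * h) ^ 2 := by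
    intro x
    rw [hrep x]
    set c := ∫ θ in (0:ℝ)..1, g' (x + θ * h) with hcdef
    have hc' : Continuous (fun θ : ℝ => g' (x + θ * h)) := hg'.cont.comp (by fun_prop)
    have h0 : 0 ≤ ∫ θ in (0:ℝ)..1, (g' (x + θ * h) - c) ^ 2 :=
      intervalIntegral.integral_nonneg (by norm_num) (fun _ _ => sq_nonneg _)
    have h1 : ∫ θ in (0:ℝ)..1, (g' (x + θ * h) - c) ^ 2
        = (∫ θ in (0:ℝ)..1, g' (x + θ * h) ^ 2) - 2 * c * c + c ^ 2 := by
      have e : ∀ θ : ℝ, (g' (x + θ * h) - c) ^ 2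
          = g' (x + θ * h) ^ 2 - 2 * c * g' (x + θ * h) + c ^ 2 := fun θ => by ring
      simp_rw [e]
      rw [intervalIntegral.integral_add, intervalIntegral.integral_sub,
        intervalIntegral.integral_const_mul, ← hcdef]
      · simp
      · exact (hc'.pow 2).intervalIntegrable _ _
      · exact (continuous_const.mul hc').intervalIntegrable _ _
      · exact ((hc'.pow 2).sub (continuous_const.mul hc')).intervalIntegrable _ _
      · exact continuous_const.intervalIntegrable _ _
    nlinarith
  have hlin : ∫⁻ x, ENNReal.ofReal (((g (x + h) - g x) / h) ^ 2) ≤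
      ∫⁻ x, ENNReal.ofReal (g' x ^ 2) := by
    calc ∫⁻ x, ENNReal.ofReal (((g (x + h) - g x) / h) ^ 2)
        ≤ ∫⁻ x, ∫⁻ θ in Ioc (0:ℝ) 1, ENNReal.ofReal (g' (x + θ * h) ^ 2) := by
          refine lintegral_mono fun x => ?_
          refine (ENNReal.ofReal_le_ofReal (hjen x)).trans ?_
          have hc' : Continuous (fun θ : ℝ => g' (x + θ * h) ^ 2) :=
            (hg'.cont.comp (by fun_prop)).pow 2
          rw [intervalIntegral.integral_of_le (by norm_num),
            ofReal_integral_eq_lintegral_ofReal]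
          · exact (hc'.intervalIntegrable 0 1).1
          · exact Eventually.of_forall fun _ => sq_nonneg _
      _ = ∫⁻ θ in Ioc (0:ℝ) 1, ∫⁻ x, ENNReal.ofReal (g' (x + θ * h) ^ 2) := by
          apply lintegral_lintegral_swap
          apply Measurable.aemeasurable
          apply Continuous.measurable
          have := hg'.cont
          apply ENNReal.continuous_ofReal.comp
          apply Continuous.pow
          apply this.comp
          fun_prop
      _ = ∫⁻ θ in Ioc (0:ℝ) 1, ∫⁻ x, ENNReal.ofReal (g' x ^ 2) := by
          congr 1; ext θ
          exact lintegral_add_right_eq_self (fun x => ENNReal.ofReal (g' x ^ 2)) (θ * h)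
      _ = ∫⁻ x, ENNReal.ofReal (g' x ^ 2) := by
          simp
  have hfin : ∫⁻ x, ENNReal.ofReal (g' x ^ 2) = ENNReal.ofReal (∫ x, g' x ^ 2) :=
    (ofReal_integral_eq_lintegral_ofReal hg'.int (Eventually.of_forall fun _ => sq_nonneg _)).symm
  have hi : Integrable (fun x => ((g (x + h) - g x) / h) ^ 2) := by
    refine ⟨(hc.pow 2).aestronglyMeasurable, ?_⟩
    rw [hasFiniteIntegral_iff_ofReal (Eventually.of_forall fun _ => sq_nonneg _)]
    exact hlin.trans_lt (by rw [hfin]; exact ENNReal.ofReal_lt_top)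
  refine ⟨hc, hi, ?_⟩
  rw [hfin, ← ofReal_integral_eq_lintegral_ofReal hi (Eventually.of_forall fun _ => sq_nonneg _)] at hlin
  have := (ENNReal.ofReal_le_ofReal_iff (integral_nonneg fun _ => sq_nonneg _)).1 hlin
  exact this.trans hg'.le

/-- If difference quotients are bounded in `L²`, so is the derivative. -/
lemma integral_sq_deriv_le_of_diffq {g g' : ℝ → ℝ} {X : ℝ} (hd : ∀ x, HasDerivAt g (g' x) x)
    (hc : Continuous g') (hi : Integrable (fun x => g' x ^ 2))
    (hX : ∀ h : ℝ, 0 < h → L2b (fun x => (g (x + h) - g x) / h) X) :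
    ∫ x, g' x ^ 2 ≤ X := by
  have hX0 : 0 ≤ X := (hX 1 one_pos).nonneg
  have hgc : Continuous g := continuous_iff_continuousAt.2 fun x => (hd x).continuousAt
  set h : ℕ → ℝ := fun n => 1 / ((n : ℝ) + 1) with hh
  have hpos : ∀ n, 0 < h n := fun n => by simp only [hh]; positivity
  have hlim : Tendsto h atTop (𝓝[≠] 0) := by
    rw [tendsto_nhdsWithin_iff]
    exact ⟨tendsto_one_div_add_atTop_nhds_zero_nat, Eventually.of_forall fun n => (hpos n).ne'⟩
  have hpt : ∀ x, Tendsto (fun n => ENNReal.ofReal (((g (x + h n) - g x) / h n) ^ 2)) atTop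
      (𝓝 (ENNReal.ofReal (g' x ^ 2))) := by
    intro x
    have h1 := (hasDerivAt_iff_tendsto_slope_zero.1 (hd x)).comp hlim
    have h2 := (ENNReal.continuous_ofReal.tendsto _).comp (h1.pow 2)
    refine h2.congr fun n => ?_
    simp [div_eq_inv_mul]
  have hF : ∫⁻ x, ENNReal.ofReal (g' x ^ 2) ≤ ENNReal.ofReal X := by
    calc ∫⁻ x, ENNReal.ofReal (g' x ^ 2)
        = ∫⁻ x, liminf (fun n => ENNReal.ofReal (((g (x + h n) - g x) / h n) ^ 2)) atTop := by
          congr 1; ext x; exact (hpt x).liminf_eq.symm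
      _ ≤ liminf (fun n => ∫⁻ x, ENNReal.ofReal (((g (x + h n) - g x) / h n) ^ 2)) atTop := by
          apply lintegral_liminf_le
          intro n
          apply Continuous.measurable
          exact ENNReal.continuous_ofReal.comp ((hX _ (hpos n)).cont.pow 2)
      _ ≤ liminf (fun _ : ℕ => ENNReal.ofReal X) atTop := by
          refine liminf_le_liminf (Eventually.of_forall fun n => ?_)
          have := hX _ (hpos n)
          rw [← ofReal_integral_eq_lintegral_ofReal this.int (Eventually.of_forall fun _ => sq_nonneg _)]
          exact ENNReal.ofReal_le_ofReal this.le
      _ = ENNReal.ofReal X := by simp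
  rw [← ofReal_integral_eq_lintegral_ofReal hi (Eventually.of_forall fun _ => sq_nonneg _)] at hF
  exact (ENNReal.ofReal_le_ofReal_iff hX0).1 hF

end PartA1

section PartA2
open Filter Topology Set

lemma exists_cutoff : ∃ C : ℝ, 0 ≤ C ∧ ∀ R : ℝ, 1 ≤ R → ∃ χ χ' χ'' : ℝ → ℝ,
    Continuous χ ∧ Continuous χ' ∧ Continuous χ'' ∧ (∀ x, HasDerivAt χ (χ' x) x) ∧
    (∀ x, HasDerivAt χ' (χ'' x) x) ∧ (∀ x, |χ x| ≤ 1) ∧ (∀ x, |χ' x| ≤ C / R) ∧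
    (∀ x, |χ'' x| ≤ C / R) ∧ (∀ x, |x| ≤ R → χ x = 1) ∧ (∀ x, 2 * R ≤ |x| → χ x = 0) ∧
    (∀ x, 2 * R ≤ |x| → χ' x = 0) := by
  let b : ContDiffBump (0 : ℝ) := ⟨1, 2, one_pos, by norm_num⟩
  have hb : ContDiff ℝ 3 (b : ℝ → ℝ) := b.contDiff
  have hb1 : ContDiff ℝ 2 (deriv (b : ℝ → ℝ)) :=
    (contDiff_succ_iff_deriv (n := 2)).1 hb |>.2.2
  have hb2 : ContDiff ℝ 1 (deriv (deriv (b : ℝ → ℝ))) :=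
    (contDiff_succ_iff_deriv (n := 1)).1 hb1 |>.2.2
  have hcs : HasCompactSupport (b : ℝ → ℝ) := b.hasCompactSupport
  obtain ⟨C1, hC1⟩ := hcs.deriv.exists_bound_of_continuous hb1.continuous
  obtain ⟨C2, hC2⟩ := hcs.deriv.deriv.exists_bound_of_continuous hb2.continuous
  have hC1' : 0 ≤ C1 := (norm_nonneg _).trans (hC1 0)
  have hC2' : 0 ≤ C2 := (norm_nonneg _).trans (hC2 0)
  have hbd : ∀ x, HasDerivAt (b : ℝ → ℝ) (deriv b x) x :=
    fun x => (hb.differentiable (by norm_num) x).hasDerivAt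
  have hbd1 : ∀ x, HasDerivAt (deriv (b : ℝ → ℝ)) (deriv (deriv b) x) x :=
    fun x => (hb1.differentiable (by norm_num) x).hasDerivAt
  have hzero : ∀ y : ℝ, 2 ≤ |y| → b y = 0 := fun y hy =>
    b.zero_of_le_dist (by simpa [Real.dist_eq] using hy)
  refine ⟨C1 + C2, by positivity, fun R hR => ?_⟩
  have hR0 : 0 < R := by linarith
  have hlin : ∀ x : ℝ, HasDerivAt (fun x : ℝ => x / R) (1 / R) x := fun x =>
    (hasDerivAt_id x).div_const R
  have hχ : ∀ x, HasDerivAt (fun x => b (x / R)) (deriv b (x / R) / R) x := by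
    intro x
    have h := HasDerivAt.comp (h₂ := (b : ℝ → ℝ)) x (hbd (x / R)) (hlin x)
    exact h.congr_deriv (by ring)
  refine ⟨fun x => b (x / R), fun x => deriv b (x / R) / R,
    fun x => deriv (deriv b) (x / R) / R / R, ?_, ?_, ?_, hχ, ?_, ?_, ?_, ?_, ?_, ?_, ?_⟩
  · exact hb.continuous.comp (by fun_prop)
  · exact (hb1.continuous.comp (continuous_id.div_const R)).div_const R
  · exact ((hb2.continuous.comp (continuous_id.div_const R)).div_const R).div_const R
  · intro x
    have h := (HasDerivAt.comp (h₂ := deriv (b : ℝ → ℝ)) x (hbd1 (x / R)) (hlin x)).div_const R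
    exact h.congr_deriv (by ring)
  · intro x
    rw [abs_of_nonneg b.nonneg]; exact b.le_one
  · intro x
    rw [abs_div, abs_of_pos hR0]
    have := hC1 (x / R)
    rw [Real.norm_eq_abs] at this
    gcongr; linarith
  · intro x
    rw [abs_div, abs_div, abs_of_pos hR0]
    have := hC2 (x / R)
    rw [Real.norm_eq_abs] at this
    have h2 : |deriv (deriv b) (x / R)| / R ≤ C1 + C2 := by
      rw [div_le_iff₀ hR0]; nlinarith [abs_nonneg (deriv (deriv b) (x / R))]
    gcongr
  · intro x hx
    apply b.one_of_mem_closedBall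
    simp only [Metric.mem_closedBall, Real.dist_eq, sub_zero]
    rw [abs_div, abs_of_pos hR0, div_le_iff₀ hR0]
    change |x| ≤ 1 * R
    linarith
  · intro x hx
    apply hzero
    rw [abs_div, abs_of_pos hR0, le_div_iff₀ hR0]; exact hx
  · intro x hx
    have h1 : 2 ≤ |x / R| := by
      rw [abs_div, abs_of_pos hR0, le_div_iff₀ hR0]; exact hx
    have h2 : IsLocalMin (b : ℝ → ℝ) (x / R) := by
      refine Eventually.of_forall fun y => ?_
      simp only [hzero _ h1]
      exact b.nonneg
    simp [h2.deriv_eq_zero]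

lemma abs_interval_mul_le {χ q : ℝ → ℝ} {c K L : ℝ} (hL : 0 ≤ L)
    (hχ : ∀ x, |χ x| ≤ c) (hq : Integrable q) (hqc : Continuous q) (hχc : Continuous χ)
    (hK : ∫ x, |q x| ≤ K) :
    |∫ x in (-L)..L, χ x * q x| ≤ c * K := by
  have hc : 0 ≤ c := (abs_nonneg _).trans (hχ 0)
  have hle : -L ≤ L := by linarith
  calc |∫ x in (-L)..L, χ x * q x| ≤ ∫ x in (-L)..L, |χ x * q x| :=
        intervalIntegral.abs_integral_le_integral_abs hle
    _ ≤ ∫ x in (-L)..L, c * |q x| := by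
        refine intervalIntegral.integral_mono_on hle ?_ ?_ ?_
        · exact (hχc.mul hqc).abs.intervalIntegrable _ _
        · exact (continuous_const.mul hqc.abs).intervalIntegrable _ _
        · intro x _
          rw [abs_mul]
          exact mul_le_mul_of_nonneg_right (hχ x) (abs_nonneg _)
    _ = c * ∫ x in (-L)..L, |q x| := intervalIntegral.integral_const_mul _ _
    _ ≤ c * K := by
        refine mul_le_mul_of_nonneg_left (le_trans ?_ hK) hc
        rw [intervalIntegral.integral_of_le hle]
        exact setIntegral_le_integral hq.abs (Eventually.of_forall fun _ => abs_nonneg _)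

/-- Balance law: if `∂ₜe = g + ∂ₓ(q₁ + ∂ₓq₂)` with fluxes bounded in `L¹`, then
`∫ e` varies at speed at most `‖g‖_{L¹}`. -/
lemma flux_lemma {c d : ℝ} (hcd : c ≤ d) (e e' g q1 q2 q2' : ℝ → ℝ → ℝ) {B K : ℝ}
    (he' : Continuous (fun p : ℝ × ℝ => e' p.1 p.2))
    (hec : ∀ t, Continuous (e t))
    (hd : ∀ t x, HasDerivAt (fun τ => e τ x) (e' t x) t)
    (hq2 : ∀ t ∈ Icc c d, ∀ x, HasDerivAt (q2 t) (q2' t x) x)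
    (hq : ∀ t ∈ Icc c d, ∀ x, HasDerivAt (fun x => q1 t x + q2' t x) (e' t x - g t x) x)
    (hgc : ∀ t ∈ Icc c d, Continuous (g t))
    (hq1c : ∀ t ∈ Icc c d, Continuous (q1 t))
    (hq2c : ∀ t ∈ Icc c d, Continuous (q2' t))
    (hgi : ∀ t ∈ Icc c d, Integrable (g t)) (hgB : ∀ t ∈ Icc c d, ∫ x, |g t x| ≤ B)
    (hq1i : ∀ t ∈ Icc c d, Integrable (q1 t)) (hq1B : ∀ t ∈ Icc c d, ∫ x, |q1 t x| ≤ K)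
    (hq2i : ∀ t ∈ Icc c d, Integrable (q2 t)) (hq2B : ∀ t ∈ Icc c d, ∫ x, |q2 t x| ≤ K)
    (hic : Integrable (e c)) (hid : Integrable (e d)) :
    |(∫ x, e d x) - ∫ x, e c x| ≤ B * (d - c) := by
  obtain ⟨C, hC, hcut⟩ := exists_cutoff
  have hcont_slice : ∀ t, Continuous (e' t) := fun t =>
    he'.comp (Continuous.prodMk continuous_const continuous_id)
  have hmain : ∀ R : ℝ, 1 ≤ R → ∃ χ : ℝ → ℝ, Continuous χ ∧ (∀ x, |χ x| ≤ 1) ∧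
      (∀ x, |x| ≤ R → χ x = 1) ∧
      |(∫ x, χ x * e d x) - ∫ x, χ x * e c x| ≤ (B + 2 * (C / R * K)) * (d - c) := by
    intro R hR
    obtain ⟨χ, χ', χ'', hχc, hχ'c, hχ''c, hχd, hχ'd, hχ1, hχ'b, hχ''b, hχR, hχ0, hχ'0⟩ := hcut R hR
    refine ⟨χ, hχc, hχ1, hχR, ?_⟩
    set L := 2 * R with hLdef
    have hL : 0 ≤ L := by linarith
    have hR0 : 0 < R := by linarith
    have habsL : |L| = L := abs_of_nonneg hL
    have hsupp : ∀ t, ∫ x, χ x * e t x = ∫ x in (-L)..L, χ x * e t x := by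
      intro t
      symm
      apply intervalIntegral.integral_eq_integral_of_support_subset
      intro x hx
      by_contra hcon
      apply hx
      have : L ≤ |x| := by
        rw [mem_Ioc, not_and_or] at hcon
        rcases hcon with h | h
        · rw [abs_of_nonpos (by linarith)]; linarith
        · rw [abs_of_pos (by linarith)]; linarith
      simp [hχ0 x this]
    have hstep : ∀ t ∈ Icc c d, |∫ x in (-L)..L, χ x * e' t x| ≤ B + 2 * (C / R * K) := by
      intro t ht
      have e1 : ∫ x in (-L)..L, χ x * e' t x =
          (∫ x in (-L)..L, χ x * g t x) + ∫ x in (-L)..L, χ x * (e' t x - g t x) := by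
        rw [← intervalIntegral.integral_add]
        · congr 1; ext x; ring
        · exact (hχc.mul (hgc t ht)).intervalIntegrable _ _
        · exact (hχc.mul ((hcont_slice t).sub (hgc t ht))).intervalIntegrable _ _
      have e2 : ∫ x in (-L)..L, χ x * (e' t x - g t x) =
          - ∫ x in (-L)..L, χ' x * (q1 t x + q2' t x) := by
        rw [intervalIntegral.integral_mul_deriv_eq_deriv_mul (fun x _ => hχd x)
          (fun x _ => hq t ht x) (hχ'c.intervalIntegrable _ _)
          (((hcont_slice t).sub (hgc t ht)).intervalIntegrable _ _)]
        rw [hχ0 L habsL.ge, hχ0 (-L) (by rw [abs_neg, habsL])]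
        ring
      have e3 : ∫ x in (-L)..L, χ' x * (q1 t x + q2' t x) =
          (∫ x in (-L)..L, χ' x * q1 t x) + ∫ x in (-L)..L, χ' x * q2' t x := by
        rw [← intervalIntegral.integral_add]
        · congr 1; ext x; ring
        · exact (hχ'c.mul (hq1c t ht)).intervalIntegrable _ _
        · exact (hχ'c.mul (hq2c t ht)).intervalIntegrable _ _
      have hq2cont : Continuous (q2 t) :=
        continuous_iff_continuousAt.2 fun x => (hq2 t ht x).continuousAt
      have e4 : ∫ x in (-L)..L, χ' x * q2' t x = - ∫ x in (-L)..L, χ'' x * q2 t x := by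
        rw [intervalIntegral.integral_mul_deriv_eq_deriv_mul (fun x _ => hχ'd x)
          (fun x _ => hq2 t ht x) (hχ''c.intervalIntegrable _ _)
          ((hq2c t ht).intervalIntegrable _ _)]
        rw [hχ'0 L habsL.ge, hχ'0 (-L) (by rw [abs_neg, habsL])]
        ring
      have b1 := abs_interval_mul_le hL hχ1 (hgi t ht) (hgc t ht) hχc (hgB t ht)
      have b2 := abs_interval_mul_le hL hχ'b (hq1i t ht) (hq1c t ht) hχ'c (hq1B t ht)
      have b3 := abs_interval_mul_le hL hχ''b (hq2i t ht) hq2cont hχ''c (hq2B t ht)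
      rw [e1, e2, e3, e4]
      rw [abs_le] at *
      constructor <;> linarith [b1.1, b1.2, b2.1, b2.2, b3.1, b3.2]
    have hftc : ∀ x, e d x - e c x = ∫ t in c..d, e' t x := by
      intro x
      rw [intervalIntegral.integral_eq_sub_of_hasDerivAt (fun t _ => hd t x)]
      exact (he'.comp (Continuous.prodMk continuous_id continuous_const)).intervalIntegrable _ _
    have hswap : (∫ x in (-L)..L, χ x * e d x) - (∫ x in (-L)..L, χ x * e c x) =
        ∫ t in c..d, ∫ x in (-L)..L, χ x * e' t x := by
      have i1 : ∀ t, IntervalIntegrable (fun x => χ x * e t x) volume (-L) L := fun t =>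
        (hχc.mul (hec t)).intervalIntegrable _ _
      rw [← intervalIntegral.integral_sub (i1 d) (i1 c)]
      rw [← MeasureTheory.intervalIntegral_intervalIntegral_swap]
      · apply intervalIntegral.integral_congr
        intro x _
        simp only
        rw [intervalIntegral.integral_const_mul, ← hftc]; ring
      · have hF : Continuous (fun p : ℝ × ℝ => χ p.1 * e' p.2 p.1) :=
          (hχc.comp continuous_fst).mul (he'.comp continuous_swap)
        have hIntOn : IntegrableOn (fun p : ℝ × ℝ => χ p.1 * e' p.2 p.1)
            (uIcc (-L) L ×ˢ uIcc c d) :=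
          hF.continuousOn.integrableOn_compact (isCompact_uIcc.prod isCompact_uIcc)
        exact hIntOn.mono_set (prod_mono uIoc_subset_uIcc uIoc_subset_uIcc)
    rw [hsupp, hsupp, hswap]
    have := intervalIntegral.norm_integral_le_of_norm_le_const (a := c) (b := d)
      (f := fun t => ∫ x in (-L)..L, χ x * e' t x) (C := B + 2 * (C / R * K)) (by
        intro t ht
        rw [uIoc_of_le hcd] at ht
        exact hstep t ⟨ht.1.le, ht.2⟩)
    rw [Real.norm_eq_abs, abs_of_nonneg (sub_nonneg.2 hcd)] at this
    exact this
  choose χ hχc hχ1 hχR hχb using fun n : ℕ => hmain ((n : ℝ) + 1) (by simp)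
  have hlim : ∀ f : ℝ → ℝ, Continuous f → Integrable f →
      Tendsto (fun n => ∫ x, χ n x * f x) atTop (𝓝 (∫ x, f x)) := by
    intro f hf hfi
    apply tendsto_integral_of_dominated_convergence (fun x => |f x|)
    · intro n; exact ((hχc n).mul hf).aestronglyMeasurable
    · exact hfi.abs
    · intro n
      refine Eventually.of_forall fun x => ?_
      rw [Real.norm_eq_abs, abs_mul]
      exact mul_le_of_le_one_left (abs_nonneg _) (hχ1 n x)
    · refine Eventually.of_forall fun x => ?_
      apply tendsto_const_nhds.congr'
      obtain ⟨N, hN⟩ := exists_nat_ge |x|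
      filter_upwards [eventually_ge_atTop N] with n hn
      rw [hχR n x, one_mul]
      have : (N : ℝ) ≤ n := by exact_mod_cast hn
      linarith
  have hl1 : Tendsto (fun n => |(∫ x, χ n x * e d x) - ∫ x, χ n x * e c x|) atTop
      (𝓝 |(∫ x, e d x) - ∫ x, e c x|) := ((hlim _ (hec d) hid).sub (hlim _ (hec c) hic)).abs
  have hl2 : Tendsto (fun n : ℕ => (B + 2 * (C / ((n : ℝ) + 1) * K)) * (d - c)) atTop
      (𝓝 (B * (d - c))) := by
    have h0 : Tendsto (fun n : ℕ => 1 / ((n : ℝ) + 1)) atTop (𝓝 0) :=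
      tendsto_one_div_add_atTop_nhds_zero_nat
    have h1 : Tendsto (fun n : ℕ => (B + 2 * (C * (1 / ((n : ℝ) + 1)) * K)) * (d - c)) atTop
      (𝓝 ((B + 2 * (C * 0 * K)) * (d - c))) :=
      ((((h0.const_mul C).mul_const K).const_mul 2).const_add B).mul_const (d - c)
    simp only [mul_zero, zero_mul, add_zero] at h1
    refine h1.congr fun n => ?_
    ring
  exact le_of_tendsto_of_tendsto' hl1 hl2 hχb

end PartA2

section PartA3
open Filter Topology Set

lemma bounded_of_locally {K D : Set ℝ} (hK : IsCompact K) (ρ : ℝ → ℝ)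
    (h : ∀ t ∈ K, ∃ δ > 0, ∃ M, ∀ r ∈ D, |r - t| < δ → ρ r ≤ M) :
    ∃ M, ∀ r ∈ K, r ∈ D → ρ r ≤ M := by
  refine hK.induction_on (p := fun s => ∃ M, ∀ r ∈ s, r ∈ D → ρ r ≤ M) ?_ ?_ ?_ ?_
  · exact ⟨0, fun r hr => hr.elim⟩
  · rintro s t hst ⟨M, hM⟩
    exact ⟨M, fun r hr => hM r (hst hr)⟩
  · rintro s t ⟨M, hM⟩ ⟨M', hM'⟩
    refine ⟨max M M', fun r hr hD => ?_⟩
    rcases hr with hr | hr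
    · exact (hM r hr hD).trans (le_max_left _ _)
    · exact (hM' r hr hD).trans (le_max_right _ _)
  · intro t ht
    obtain ⟨δ, hδ, M, hM⟩ := h t ht
    refine ⟨Metric.ball t δ, mem_nhdsWithin_of_mem_nhds (Metric.ball_mem_nhds t hδ), M, ?_⟩
    intro r hr hD
    exact hM r hD (by simpa [Real.dist_eq] using hr)

lemma baire_gap {T : ℝ} (ρ : ℝ → ℝ)
    (hcl : ∀ n : ℕ, IsClosed {t | t ∈ Icc 0 T ∧ ρ t ≤ n})
    (hgap : ∀ n : ℕ, ∃ τ > 0, ∃ M : ℝ, ∀ a ∈ Icc 0 T, ∀ t ∈ Icc 0 T, ρ a ≤ n → |t - a| ≤ τ →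
      (∀ c ∈ uIcc a t, c ≠ a → ∃ M', ∀ r ∈ uIcc c t, ρ r ≤ M') → ρ t ≤ M) :
    ∃ M, ∀ t ∈ Icc 0 T, ρ t ≤ M := by
  by_contra hcon
  set G : Set ℝ := {t | ∃ δ > 0, ∃ M, ∀ r ∈ Icc 0 T, |r - t| < δ → ρ r ≤ M} with hG
  have hGo : IsOpen G := by
    rw [Metric.isOpen_iff]
    rintro t ⟨δ, hδ, M, hM⟩
    refine ⟨δ / 2, by positivity, ?_⟩
    intro s hs
    rw [Metric.mem_ball, Real.dist_eq] at hs
    refine ⟨δ / 2, by positivity, M, fun r hr hrs => hM r hr ?_⟩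
    calc |r - t| ≤ |r - s| + |s - t| := abs_sub_le _ _ _
      _ < δ := by linarith
  set B : Set ℝ := Icc 0 T \ G with hB
  have hBc : IsClosed B := isClosed_Icc.sdiff hGo
  have hBne : B.Nonempty := by
    by_contra hne
    rw [not_nonempty_iff_eq_empty] at hne
    apply hcon
    obtain ⟨M, hM⟩ := bounded_of_locally (D := Icc 0 T) (isCompact_Icc (a := (0:ℝ)) (b := T)) ρ (by
      intro t ht
      by_contra h
      have : t ∈ B := ⟨ht, h⟩
      rw [hne] at this
      exact this)
    exact ⟨M, fun t ht => hM t ht ht⟩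
  haveI : CompleteSpace B := hBc.completeSpace_coe
  haveI : Nonempty B := hBne.to_subtype
  obtain ⟨n, b, hb⟩ := nonempty_interior_of_iUnion_of_closed
    (f := fun n : ℕ => {x : B | ρ x ≤ n}) (by
      intro n
      have h := (hcl n).preimage (continuous_subtype_val (p := fun x => x ∈ B))
      convert h using 1
      ext x
      simp only [mem_ofPred_eq, mem_preimage]
      exact ⟨fun h => ⟨x.2.1, h⟩, fun h => h.2⟩) (by
      rw [eq_univ_iff_forall]
      intro x
      obtain ⟨n, hn⟩ := exists_nat_ge (ρ x)
      exact mem_iUnion.2 ⟨n, hn⟩)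
  rw [mem_interior_iff_mem_nhds, Metric.mem_nhds_iff] at hb
  obtain ⟨δ, hδ, hball⟩ := hb
  obtain ⟨τ, hτ, M, hM⟩ := hgap n
  have hbB : (b : ℝ) ∈ B := b.2
  apply hbB.2
  refine ⟨min δ τ, lt_min hδ hτ, max n M, fun t ht htb => ?_⟩
  obtain ⟨hbδ, hbτ⟩ := lt_min_iff.1 htb
  have hcomp : IsCompact (B ∩ uIcc (b : ℝ) t) := isCompact_uIcc.inter_left hBc
  obtain ⟨a, ⟨haB, hau⟩, hmin⟩ := hcomp.exists_isMinOn (f := fun x => |x - t|)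
    ⟨b, hbB, left_mem_uIcc⟩ (by fun_prop)
  have hmin' : ∀ r ∈ B, r ∈ uIcc (b : ℝ) t → |a - t| ≤ |r - t| := fun r h1 h2 => hmin ⟨h1, h2⟩
  have hab : |a - b| ≤ |t - b| ∧ |t - a| ≤ |t - b| := by
    rcases le_total (b : ℝ) t with h | h
    · rw [uIcc_of_le h, mem_Icc] at hau
      rw [abs_of_nonneg (by linarith : a - (b : ℝ) ≥ 0), abs_of_nonneg (by linarith : t - (b : ℝ) ≥ 0),
        abs_of_nonneg (by linarith : t - a ≥ 0)]
      constructor <;> linarith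
    · rw [uIcc_of_ge h, mem_Icc] at hau
      rw [abs_of_nonpos (by linarith : a - (b : ℝ) ≤ 0), abs_of_nonpos (by linarith : t - (b : ℝ) ≤ 0),
        abs_of_nonpos (by linarith : t - a ≤ 0)]
      constructor <;> linarith
  have hρa : ρ a ≤ n := by
    have : (⟨a, haB⟩ : B) ∈ Metric.ball b δ := by
      rw [Metric.mem_ball, Subtype.dist_eq, Real.dist_eq]
      exact hab.1.trans_lt hbδ
    exact hball this
  refine le_trans (hM a haB.1 t ht hρa (hab.2.trans hbτ.le) ?_) (le_max_right _ _)
  intro c hc hca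
  obtain ⟨M', hM'⟩ := bounded_of_locally (K := uIcc c t) (D := Icc 0 T) isCompact_uIcc ρ (by
    intro r hr
    by_contra hrG
    have hr' : r ∈ uIcc (b : ℝ) t ∧ |r - t| < |a - t| := by
      rcases le_total (b : ℝ) t with h | h
      · rw [uIcc_of_le h, mem_Icc] at hau
        rw [uIcc_of_le hau.2, mem_Icc] at hc
        rw [uIcc_of_le hc.2, mem_Icc] at hr
        have : a < c := lt_of_le_of_ne hc.1 (Ne.symm hca)
        rw [uIcc_of_le h, abs_of_nonpos (by linarith), abs_of_nonpos (by linarith)]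
        exact ⟨⟨by linarith, by linarith⟩, by linarith⟩
      · rw [uIcc_of_ge h, mem_Icc] at hau
        rw [uIcc_of_ge hau.1, mem_Icc] at hc
        rw [uIcc_of_ge hc.1, mem_Icc] at hr
        have : c < a := lt_of_le_of_ne hc.2 hca
        rw [uIcc_of_ge h, abs_of_nonneg (by linarith), abs_of_nonneg (by linarith)]
        exact ⟨⟨by linarith, by linarith⟩, by linarith⟩
    have hrT : r ∈ Icc 0 T := (ordConnected_Icc.uIcc_subset hbB.1 ht) hr'.1
    exact absurd (hmin' r ⟨hrT, hrG⟩ hr'.1) (not_le.2 hr'.2))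
  refine ⟨M', fun r hr => hM' r hr ?_⟩
  have h1 : c ∈ Icc 0 T := (ordConnected_Icc.uIcc_subset haB.1 ht) hc
  exact (ordConnected_Icc.uIcc_subset h1 ht) hr

lemma gap_gronwall (y e : ℝ → ℝ) {A : ℝ}
    (hy0 : ∀ r, 0 ≤ y r)
    (hb : ∀ c ∈ Ico (0:ℝ) 1, ∃ M, ∀ r ∈ Icc 0 c, y r ≤ M)
    (he : ∀ c d, 0 ≤ c → c ≤ d → d < 1 → ∀ Y, 0 ≤ Y → (∀ r ∈ Icc c d, y r ≤ Y) →
      |e d - e c| ≤ A * (1 + Y) * (d - c))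
    (hye : ∀ r ∈ Ico (0:ℝ) 1, |y r - e r| ≤ A) :
    ∃ M, ∀ r ∈ Ico (0:ℝ) 1, y r ≤ M := by
  have hA : 0 ≤ A := (abs_nonneg _).trans (hye 0 ⟨le_rfl, one_pos⟩)
  obtain ⟨N, hN⟩ := exists_nat_gt (2 * A)
  have hN0 : (0:ℝ) < N := by linarith
  have hstep : ∀ n : ℕ, ∃ M, 0 ≤ M ∧ ∀ r ∈ Ico (0:ℝ) 1, r ≤ n / N → y r ≤ M := by
    intro n
    induction n with
    | zero =>
      refine ⟨y 0, hy0 0, fun r hr h => ?_⟩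
      have : r = 0 := le_antisymm (by simpa using h) hr.1
      rw [this]
    | succ n ih =>
      obtain ⟨M, hM0, hM⟩ := ih
      refine ⟨max M (2 * (M + 2 * A + 1)), le_max_of_le_left hM0, fun r hr h => ?_⟩
      rcases le_total r (n / N) with hrn | hrn
      · exact (hM r hr hrn).trans (le_max_left _ _)
      refine le_trans ?_ (le_max_right _ _)
      set p : ℝ := n / N with hp
      have hp0 : 0 ≤ p := by positivity
      have hpm : p ∈ Ico (0:ℝ) 1 := ⟨hp0, hrn.trans_lt hr.2⟩
      have hlen : r - p ≤ 1 / N := by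
        rw [hp]; push_cast at h; rw [add_div] at h; linarith
      obtain ⟨M', hM'⟩ := hb r hr
      set Y := sSup (y '' Icc p r) with hY
      have hbdd : BddAbove (y '' Icc p r) := by
        refine ⟨M', ?_⟩
        rintro _ ⟨q, hq, rfl⟩
        exact hM' q ⟨hp0.trans hq.1, hq.2⟩
      have hYq : ∀ q ∈ Icc p r, y q ≤ Y := fun q hq => le_csSup hbdd ⟨q, hq, rfl⟩
      have hY0 : 0 ≤ Y := (hy0 r).trans (hYq r ⟨hrn, le_rfl⟩)
      have hkey : ∀ q ∈ Icc p r, y q ≤ M + 2 * A + 1 / 2 + Y / 2 := by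
        intro q hq
        have h1 := he p q hp0 hq.1 (hq.2.trans_lt hr.2) Y hY0
          (fun r' hr' => hYq r' ⟨hr'.1, hr'.2.trans hq.2⟩)
        have h2 := hye q ⟨hp0.trans hq.1, hq.2.trans_lt hr.2⟩
        have h3 := hye p hpm
        have h4 := hM p hpm le_rfl
        have h5 : A * (1 + Y) * (q - p) ≤ (1 + Y) / 2 := by
          have : A * (q - p) ≤ 1 / 2 := by
            calc A * (q - p) ≤ A * (1 / N) := by
                  apply mul_le_mul_of_nonneg_left _ hA; linarith [hq.2]
              _ ≤ 1 / 2 := by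
                  rw [mul_one_div, div_le_div_iff₀ hN0 (by norm_num)]; linarith
          nlinarith
        rw [abs_le] at h1 h2 h3
        linarith [h1.1, h1.2, h2.1, h2.2, h3.1, h3.2]
      have hYle : Y ≤ M + 2 * A + 1 / 2 + Y / 2 := by
        refine csSup_le ⟨y r, r, ⟨hrn, le_rfl⟩, rfl⟩ ?_
        rintro _ ⟨q, hq, rfl⟩
        exact hkey q hq
      have := hYq r ⟨hrn, le_rfl⟩
      linarith
  obtain ⟨M, -, hM⟩ := hstep N
  refine ⟨M, fun r hr => hM r hr ?_⟩
  rw [div_self hN0.ne']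
  exact hr.2.le

lemma first_exit (H G : ℝ → ℝ) {n : ℝ} (hn : 0 < n)
    (hb : ∃ M, ∀ r ∈ Icc (0:ℝ) 1, H r ≤ M)
    (hloc : ∀ ν > 0, ∀ c d, 0 ≤ c → c ≤ d → d ≤ 1 → (∀ r ∈ Icc c d, H r ≤ ν ^ 2) →
      |H d - H c| ≤ G ν * (d - c))
    (hG : G (2 * n) ≤ n ^ 2) (h0 : H 0 ≤ n ^ 2) :
    ∀ r ∈ Icc (0:ℝ) 1, H r ≤ 4 * n ^ 2 := by
  obtain ⟨M, hM⟩ := hb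
  have hM' : ∀ r ∈ Icc (0:ℝ) 1, H r ≤ (1 + |M|) ^ 2 := by
    intro r hr
    have := hM r hr
    nlinarith [le_abs_self M, abs_nonneg M]
  have hcont : ContinuousOn H (Icc 0 1) := by
    have hL : LipschitzOnWith (Real.toNNReal (G (1 + |M|))) H (Icc 0 1) := by
      have hord : ∀ c d, 0 ≤ c → c ≤ d → d ≤ 1 → |H d - H c| ≤ (Real.toNNReal (G (1 + |M|))) * (d - c) := by
        intro c d hc hcd hd
        refine (hloc (1 + |M|) (by positivity) c d hc hcd hd (fun r hr =>
          hM' r ⟨hc.trans hr.1, hr.2.trans hd⟩)).trans ?_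
        exact mul_le_mul_of_nonneg_right (Real.le_coe_toNNReal _) (by linarith)
      refine LipschitzOnWith.of_dist_le_mul fun x hx z hz => ?_
      rw [Real.dist_eq, Real.dist_eq]
      rcases le_total x z with h | h
      · have := hord x z hx.1 h hz.2
        rw [abs_sub_comm, abs_sub_comm x, abs_of_nonneg (sub_nonneg.2 h)]; exact this
      · have := hord z x hz.1 h hx.2
        rw [abs_of_nonneg (sub_nonneg.2 h)]; exact this
    exact hL.continuousOn
  by_contra hcon
  push Not at hcon
  obtain ⟨r, hr, hHr⟩ := hcon
  have hcomp : IsCompact (Icc (0:ℝ) 1 ∩ H ⁻¹' (Ici (4 * n ^ 2))) :=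
    isCompact_Icc.of_isClosed_subset
      (hcont.preimage_isClosed_of_isClosed isClosed_Icc isClosed_Ici) inter_subset_left
  obtain ⟨θ, ⟨hθ, hHθ⟩, hmin⟩ := hcomp.exists_isLeast ⟨r, hr, hHr.le⟩
  have hbelow : ∀ q ∈ Ico 0 θ, H q ≤ 4 * n ^ 2 := by
    intro q hq
    by_contra h
    have := hmin ⟨⟨hq.1, hq.2.le.trans hθ.2⟩, (not_le.1 h).le⟩
    exact absurd hq.2 (not_lt.2 this)
  have hHθ' : 4 * n ^ 2 ≤ H θ := hHθ
  have hθ0 : 0 < θ := by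
    rcases hθ.1.eq_or_lt with h | h
    · rw [← h] at hHθ'; nlinarith
    · exact h
  have hle : H θ ≤ 4 * n ^ 2 := by
    have h1 : ContinuousWithinAt H (Ico 0 θ) θ :=
      (hcont θ hθ).mono (fun q hq => ⟨hq.1, hq.2.le.trans hθ.2⟩)
    have h2 : θ ∈ closure (Ico 0 θ) := by
      rw [closure_Ico hθ0.ne]; exact ⟨hθ.1, le_rfl⟩
    exact h1.closure_le h2 continuousWithinAt_const hbelow
  have := hloc (2 * n) (by positivity) 0 θ le_rfl hθ.1 hθ.2 (fun q hq => by
    rcases hq.2.eq_or_lt with h | h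
    · rw [h]; linarith
    · linarith [hbelow q ⟨hq.1, h⟩])
  have h3 : G (2 * n) * (θ - 0) ≤ n ^ 2 := by
    nlinarith [hθ.2, sq_nonneg n]
  have := (le_abs_self _).trans this
  nlinarith

end PartA3

section PartA4
open Filter Topology Set
open scoped ContDiff

noncomputable def pdx (f : ℝ × ℝ → ℝ) (p : ℝ × ℝ) : ℝ := fderiv ℝ f p (0, 1)
noncomputable def pdt (f : ℝ × ℝ → ℝ) (p : ℝ × ℝ) : ℝ := fderiv ℝ f p (1, 0)

lemma pdx_contDiff {f : ℝ × ℝ → ℝ} (hf : ContDiff ℝ ∞ f) : ContDiff ℝ ∞ (pdx f) :=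
  (hf.fderiv_right (m := ∞) (by simp)).clm_apply contDiff_const

lemma pdt_contDiff {f : ℝ × ℝ → ℝ} (hf : ContDiff ℝ ∞ f) : ContDiff ℝ ∞ (pdt f) :=
  (hf.fderiv_right (m := ∞) (by simp)).clm_apply contDiff_const

lemma pdx_hasDerivAt {f : ℝ × ℝ → ℝ} (hf : ContDiff ℝ ∞ f) (t x : ℝ) :
    HasDerivAt (fun x => f (t, x)) (pdx f (t, x)) x := by
  have h1 : HasFDerivAt f (fderiv ℝ f (t, x)) (t, x) :=
    (hf.differentiable (by simp) (t, x)).hasFDerivAt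
  have h2 : HasDerivAt (fun x : ℝ => (t, x)) ((0 : ℝ), (1 : ℝ)) x :=
    (hasDerivAt_const x t).prodMk (hasDerivAt_id x)
  exact h1.comp_hasDerivAt x h2

lemma pdt_hasDerivAt {f : ℝ × ℝ → ℝ} (hf : ContDiff ℝ ∞ f) (t x : ℝ) :
    HasDerivAt (fun t => f (t, x)) (pdt f (t, x)) t := by
  have h1 : HasFDerivAt f (fderiv ℝ f (t, x)) (t, x) :=
    (hf.differentiable (by simp) (t, x)).hasFDerivAt
  have h2 : HasDerivAt (fun t : ℝ => (t, x)) ((1 : ℝ), (0 : ℝ)) t :=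
    (hasDerivAt_id t).prodMk (hasDerivAt_const t x)
  exact h1.comp_hasDerivAt t h2

lemma pd_comm {f : ℝ × ℝ → ℝ} (hf : ContDiff ℝ ∞ f) (p : ℝ × ℝ) :
    pdx (pdt f) p = pdt (pdx f) p := by
  have hd : DifferentiableAt ℝ (fderiv ℝ f) p :=
    (hf.fderiv_right (m := ∞) (by simp)).differentiable (by simp) p
  have e : ∀ v w : ℝ × ℝ, fderiv ℝ (fun q => fderiv ℝ f q v) p w = fderiv ℝ (fderiv ℝ f) p w v := by
    intro v w
    have := hd.hasFDerivAt.clm_apply (hasFDerivAt_const v p)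
    rw [this.fderiv]
    simp
  have hs : IsSymmSndFDerivAt ℝ f p := (hf.contDiffAt).isSymmSndFDerivAt
    (by simp only [minSmoothness_of_isRCLikeNormedField]; exact WithTop.coe_le_coe.2 le_top)
  change fderiv ℝ (fun q => fderiv ℝ f q (1, 0)) p (0, 1) =
    fderiv ℝ (fun q => fderiv ℝ f q (0, 1)) p (1, 0)
  rw [e, e]
  exact hs.eq _ _

/-- Space derivatives of a family. -/
noncomputable def VV (U : ℝ → SchwartzMap ℝ ℝ) (j : ℕ) (t x : ℝ) : ℝ := iteratedDeriv j (⇑(U t)) x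

/-- Time derivative of the space derivatives. -/
noncomputable def WW (U : ℝ → SchwartzMap ℝ ℝ) (j : ℕ) (t x : ℝ) : ℝ :=
  pdt (fun p : ℝ × ℝ => VV U j p.1 p.2) (t, x)

def SmoothFam (U : ℝ → SchwartzMap ℝ ℝ) : Prop := ContDiff ℝ ∞ (fun p : ℝ × ℝ => U p.1 p.2)

lemma schwartz_iter (f : SchwartzMap ℝ ℝ) (j : ℕ) :
    ∃ g : SchwartzMap ℝ ℝ, ∀ x, g x = iteratedDeriv j (⇑f) x := by
  induction j with
  | zero => exact ⟨f, fun x => by simp⟩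
  | succ j ih =>
    obtain ⟨g, hg⟩ := ih
    refine ⟨SchwartzMap.derivCLM ℝ ℝ g, fun x => ?_⟩
    rw [SchwartzMap.derivCLM_apply, iteratedDeriv_succ]
    congr 1
    ext x; exact hg x

lemma VV_hasDerivAt (U : ℝ → SchwartzMap ℝ ℝ) (j : ℕ) (t x : ℝ) :
    HasDerivAt (VV U j t) (VV U (j + 1) t x) x := by
  have h : VV U (j + 1) t x = deriv (VV U j t) x := by
    unfold VV; rw [iteratedDeriv_succ]
  rw [h]
  apply DifferentiableAt.hasDerivAt
  have hd : ContDiff ℝ ∞ (⇑(U t)) := (U t).smooth _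
  exact (hd.differentiable_iteratedDeriv j (by exact_mod_cast ENat.natCast_lt_top j)) x

lemma VV_cont (U : ℝ → SchwartzMap ℝ ℝ) (j : ℕ) (t : ℝ) : Continuous (VV U j t) :=
  continuous_iff_continuousAt.2 fun x => (VV_hasDerivAt U j t x).continuousAt

lemma VV_zero (U : ℝ → SchwartzMap ℝ ℝ) (t x : ℝ) : VV U 0 t x = U t x := by simp [VV]

noncomputable def yy (U : ℝ → SchwartzMap ℝ ℝ) (j : ℕ) (t : ℝ) : ℝ := ∫ x, VV U j t x ^ 2

lemma yy_nonneg (U : ℝ → SchwartzMap ℝ ℝ) (j : ℕ) (t : ℝ) : 0 ≤ yy U j t :=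
  integral_nonneg fun _ => sq_nonneg _

lemma VV_L2b (U : ℝ → SchwartzMap ℝ ℝ) (j : ℕ) (t : ℝ) : L2b (VV U j t) (yy U j t) := by
  refine ⟨VV_cont U j t, ?_, le_rfl⟩
  obtain ⟨g, hg⟩ := schwartz_iter (U t) j
  have := (g.memLp 2 volume).integrable_sq
  refine this.congr (Eventually.of_forall fun x => ?_)
  simp only [hg, VV]

lemma VV_contDiff {U : ℝ → SchwartzMap ℝ ℝ} (hU : SmoothFam U) (j : ℕ) :
    ContDiff ℝ ∞ (fun p : ℝ × ℝ => VV U j p.1 p.2) := by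
  induction j with
  | zero => simpa [VV] using (show ContDiff ℝ ∞ (fun p : ℝ × ℝ => U p.1 p.2) from hU)
  | succ j ih =>
    have h := pdx_contDiff ih
    convert h using 1
    ext p
    exact (VV_hasDerivAt U j p.1 p.2).unique (pdx_hasDerivAt ih p.1 p.2)

lemma VV_jcont {U : ℝ → SchwartzMap ℝ ℝ} (hU : SmoothFam U) (j : ℕ) :
    Continuous (fun p : ℝ × ℝ => VV U j p.1 p.2) := (VV_contDiff hU j).continuous

lemma WW_jcont {U : ℝ → SchwartzMap ℝ ℝ} (hU : SmoothFam U) (j : ℕ) :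
    Continuous (fun p : ℝ × ℝ => WW U j p.1 p.2) := (pdt_contDiff (VV_contDiff hU j)).continuous

lemma WW_hasDerivAt_t {U : ℝ → SchwartzMap ℝ ℝ} (hU : SmoothFam U) (j : ℕ) (t x : ℝ) :
    HasDerivAt (fun τ => VV U j τ x) (WW U j t x) t :=
  pdt_hasDerivAt (VV_contDiff hU j) t x

lemma WW_hasDerivAt_x {U : ℝ → SchwartzMap ℝ ℝ} (hU : SmoothFam U) (j : ℕ) (t x : ℝ) :
    HasDerivAt (WW U j t) (WW U (j + 1) t x) x := by
  have h := pdx_hasDerivAt (pdt_contDiff (VV_contDiff hU j)) t x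
  refine h.congr_deriv ?_
  rw [pd_comm (VV_contDiff hU j)]
  unfold WW
  congr 1
  ext p
  exact (pdx_hasDerivAt (VV_contDiff hU j) p.1 p.2).unique (VV_hasDerivAt U j p.1 p.2)

/-- solution of gKdV with power `k` on `[0,T]` -/
def Sol (k : ℕ) (T : ℝ) (U : ℝ → SchwartzMap ℝ ℝ) : Prop :=
  SmoothFam U ∧ ∀ t ∈ Icc (0:ℝ) T, ∀ x,
    WW U 0 t x = - VV U 3 t x - VV U 0 t x ^ k * VV U 1 t x

noncomputable def HH (U : ℝ → SchwartzMap ℝ ℝ) (M : ℕ) (t : ℝ) : ℝ :=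
  ∑ n ∈ Finset.range (M + 1), yy U n t

lemma HH_nonneg (U : ℝ → SchwartzMap ℝ ℝ) (M : ℕ) (t : ℝ) : 0 ≤ HH U M t :=
  Finset.sum_nonneg fun _ _ => yy_nonneg _ _ _

lemma HH_mono (U : ℝ → SchwartzMap ℝ ℝ) {M N : ℕ} (h : M ≤ N) (t : ℝ) : HH U M t ≤ HH U N t :=
  Finset.sum_le_sum_of_subset_of_nonneg (by
    intro i hi; simp only [Finset.mem_range] at *; omega) fun _ _ _ => yy_nonneg _ _ _

lemma yy_le_HH (U : ℝ → SchwartzMap ℝ ℝ) {j M : ℕ} (h : j ≤ M) (t : ℝ) : yy U j t ≤ HH U M t :=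
  Finset.single_le_sum (f := fun n => yy U n t) (fun _ _ => yy_nonneg _ _ _)
    (Finset.mem_range.2 (by omega))

lemma HH_succ (U : ℝ → SchwartzMap ℝ ℝ) (M : ℕ) (t : ℝ) :
    HH U (M + 1) t = HH U M t + yy U (M + 1) t := by
  unfold HH; rw [Finset.sum_range_succ]

lemma VV_sup (U : ℝ → SchwartzMap ℝ ℝ) {j M : ℕ} (h : j + 1 ≤ M) (t x : ℝ) :
    VV U j t x ^ 2 ≤ HH U M t := by
  have := sup_sq_le (fun x => VV_hasDerivAt U j t x) (VV_L2b U j t) (VV_L2b U (j + 1) t) one_pos x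
  rw [one_mul, div_one] at this
  refine this.trans ?_
  have h2 : yy U j t ≤ HH U j t := yy_le_HH U le_rfl t
  have h3 := HH_mono U h t
  rw [HH_succ] at h3
  linarith

lemma HH_closed {U : ℝ → SchwartzMap ℝ ℝ} (hU : SmoothFam U) (N : ℕ) (T n : ℝ) :
    IsClosed {t | t ∈ Icc 0 T ∧ HH U N t ≤ n} := by
  have key : {t | t ∈ Icc 0 T ∧ HH U N t ≤ n} = Icc 0 T ∩ ⋂ R : ℕ,
      {t | ∑ j ∈ Finset.range (N + 1), ∫ x in (-(R : ℝ))..R, VV U j t x ^ 2 ≤ n} := by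
    ext t
    simp only [mem_ofPred_eq, mem_inter_iff, mem_iInter]
    refine and_congr_right fun _ => ⟨fun h R => le_trans ?_ h, fun h => ?_⟩
    · refine Finset.sum_le_sum fun j _ => ?_
      rw [intervalIntegral.integral_of_le (by linarith [Nat.cast_nonneg (α := ℝ) R])]
      exact setIntegral_le_integral (VV_L2b U j t).int (Eventually.of_forall fun _ => sq_nonneg _)
    · refine le_of_tendsto' (x := atTop) (tendsto_finsetSum _ fun j _ => ?_) h
      exact intervalIntegral_tendsto_integral (VV_L2b U j t).int
        (tendsto_neg_atTop_atBot.comp tendsto_natCast_atTop_atTop) tendsto_natCast_atTop_atTop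
  rw [key]
  refine isClosed_Icc.inter (isClosed_iInter fun R => isClosed_le ?_ continuous_const)
  refine continuous_finsetSum _ fun j _ => ?_
  apply intervalIntegral.continuous_parametric_intervalIntegral_of_continuous'
  exact (VV_jcont hU j).pow 2

end PartA4

section PartA5
open Filter Topology Set

def incL : List ℕ → List (List ℕ)
  | [] => []
  | a :: l => ((a + 1) :: l) :: (incL l).map (fun l' => a :: l')

lemma incL_length {l l' : List ℕ} (h : l' ∈ incL l) : l'.length = l.length := by
  induction l generalizing l' with
  | nil => simp [incL] at h
  | cons a l ih =>
    simp only [incL, List.mem_cons, List.mem_map] at h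
    rcases h with h | ⟨b, hb, rfl⟩
    · rw [h]; simp
    · simp [ih hb]

lemma incL_sum {l l' : List ℕ} (h : l' ∈ incL l) : l'.sum = l.sum + 1 := by
  induction l generalizing l' with
  | nil => simp [incL] at h
  | cons a l ih =>
    simp only [incL, List.mem_cons, List.mem_map] at h
    rcases h with h | ⟨b, hb, rfl⟩
    · rw [h]; simp; ring
    · simp [ih hb]; ring

lemma incL_le {l l' : List ℕ} {m : ℕ} (h : l' ∈ incL l) (hl : ∀ i ∈ l, i ≤ m) :
    ∀ i ∈ l', i ≤ m + 1 := by
  induction l generalizing l' with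
  | nil => simp [incL] at h
  | cons a l ih =>
    simp only [List.mem_cons, forall_eq_or_imp] at hl
    simp only [incL, List.mem_cons, List.mem_map] at h
    rcases h with h | ⟨b, hb, rfl⟩
    · rw [h]
      simp only [List.mem_cons, forall_eq_or_imp]
      exact ⟨by omega, fun i hi => (hl.2 i hi).trans (by omega)⟩
    · simp only [List.mem_cons, forall_eq_or_imp]
      exact ⟨by omega, ih hb hl.2⟩

noncomputable def PP (U : ℝ → SchwartzMap ℝ ℝ) (l : List ℕ) (t x : ℝ) : ℝ :=
  (l.map (fun i => VV U i t x)).prod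

noncomputable def SP (U : ℝ → SchwartzMap ℝ ℝ) (L : List (List ℕ)) (t x : ℝ) : ℝ :=
  (L.map (fun l => PP U l t x)).sum

lemma PP_nil (U : ℝ → SchwartzMap ℝ ℝ) (t x : ℝ) : PP U [] t x = 1 := by simp [PP]
lemma PP_cons (U : ℝ → SchwartzMap ℝ ℝ) (a : ℕ) (l : List ℕ) (t x : ℝ) :
    PP U (a :: l) t x = VV U a t x * PP U l t x := by simp [PP]
lemma SP_nil (U : ℝ → SchwartzMap ℝ ℝ) (t x : ℝ) : SP U [] t x = 0 := by simp [SP]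
lemma SP_cons (U : ℝ → SchwartzMap ℝ ℝ) (l : List ℕ) (L : List (List ℕ)) (t x : ℝ) :
    SP U (l :: L) t x = PP U l t x + SP U L t x := by simp [SP]
lemma SP_append (U : ℝ → SchwartzMap ℝ ℝ) (L L' : List (List ℕ)) (t x : ℝ) :
    SP U (L ++ L') t x = SP U L t x + SP U L' t x := by simp [SP]
lemma SP_map_cons (U : ℝ → SchwartzMap ℝ ℝ) (a : ℕ) (L : List (List ℕ)) (t x : ℝ) :
    SP U (L.map (fun l => a :: l)) t x = VV U a t x * SP U L t x := by
  induction L with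
  | nil => simp [SP]
  | cons l L ih => rw [List.map_cons, SP_cons, SP_cons, ih, PP_cons]; ring

lemma PP_hasDerivAt (U : ℝ → SchwartzMap ℝ ℝ) (l : List ℕ) (t x : ℝ) :
    HasDerivAt (PP U l t) (SP U (incL l) t x) x := by
  induction l with
  | nil =>
    have : PP U [] t = fun _ => 1 := by ext x; exact PP_nil U t x
    rw [this]; simp only [incL, SP_nil]; exact hasDerivAt_const _ _
  | cons a l ih =>
    have : PP U (a :: l) t = fun x => VV U a t x * PP U l t x := by ext x; exact PP_cons U a l t x
    rw [this]
    refine ((VV_hasDerivAt U a t x).mul ih).congr_deriv ?_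
    simp only [incL, SP_cons, SP_map_cons, PP_cons]

lemma PP_cont (U : ℝ → SchwartzMap ℝ ℝ) (l : List ℕ) (t : ℝ) : Continuous (PP U l t) :=
  continuous_iff_continuousAt.2 fun x => (PP_hasDerivAt U l t x).continuousAt

lemma SP_hasDerivAt (U : ℝ → SchwartzMap ℝ ℝ) (L : List (List ℕ)) (t x : ℝ) :
    HasDerivAt (SP U L t) (SP U (L.flatMap incL) t x) x := by
  induction L with
  | nil =>
    have : SP U [] t = fun _ => 0 := by ext x; exact SP_nil U t x
    rw [this]; simp only [List.flatMap_nil, SP_nil]; exact hasDerivAt_const _ _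
  | cons l L ih =>
    have : SP U (l :: L) t = fun x => PP U l t x + SP U L t x := by ext x; exact SP_cons U l L t x
    rw [this, List.flatMap_cons, SP_append]
    exact (PP_hasDerivAt U l t x).add ih

/-- remainder terms in `∂^m (f^k ∂f)` -/
def RL (k : ℕ) : ℕ → List (List ℕ)
  | 0 => []
  | m + 1 => (RL k m).flatMap incL ++ (incL (List.replicate k 0)).map (fun l => (m + 1) :: l)

def GoodL (k m : ℕ) (l : List ℕ) : Prop := l.length = k + 1 ∧ l.sum = m + 1 ∧ ∀ i ∈ l, i ≤ m

lemma GoodL_inc {k m : ℕ} {L : List (List ℕ)} (h : ∀ l ∈ L, GoodL k m l) :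
    ∀ l ∈ L.flatMap incL, GoodL k (m + 1) l := by
  intro l hl
  rw [List.mem_flatMap] at hl
  obtain ⟨a, ha, hl⟩ := hl
  obtain ⟨h1, h2, h3⟩ := h a ha
  exact ⟨(incL_length hl).trans h1, by rw [incL_sum hl, h2], incL_le hl h3⟩

lemma RL_good (k m : ℕ) : ∀ l ∈ RL k m, GoodL k m l := by
  induction m with
  | zero => simp [RL]
  | succ m ih =>
    intro l hl
    simp only [RL, List.mem_append, List.mem_map] at hl
    rcases hl with hl | ⟨a, ha, rfl⟩
    · exact GoodL_inc ih l hl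
    · refine ⟨by simp [incL_length ha], by simp [incL_sum ha], ?_⟩
      have := incL_le (m := 0) ha (by simp)
      simp only [List.mem_cons, forall_eq_or_imp]
      exact ⟨le_rfl, fun i hi => (this i hi).trans (by omega)⟩

lemma PP_replicate (U : ℝ → SchwartzMap ℝ ℝ) (k : ℕ) (t x : ℝ) :
    PP U (List.replicate k 0) t x = VV U 0 t x ^ k := by simp [PP]

lemma V0pow_hasDerivAt (U : ℝ → SchwartzMap ℝ ℝ) (k : ℕ) (t x : ℝ) :
    HasDerivAt (fun x => VV U 0 t x ^ k) (SP U (incL (List.replicate k 0)) t x) x := by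
  have h := PP_hasDerivAt U (List.replicate k 0) t x
  have e : PP U (List.replicate k 0) t = fun x => VV U 0 t x ^ k := by
    ext x; exact PP_replicate U k t x
  rwa [e] at h

/-- The full nonlinearity `∂^m (f^k ∂f)`. -/
noncomputable def NL (U : ℝ → SchwartzMap ℝ ℝ) (k m : ℕ) (t x : ℝ) : ℝ :=
  VV U 0 t x ^ k * VV U (m + 1) t x + SP U (RL k m) t x

lemma NL_hasDerivAt (U : ℝ → SchwartzMap ℝ ℝ) (k m : ℕ) (t x : ℝ) :
    HasDerivAt (NL U k m t) (NL U k (m + 1) t x) x := by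
  have h := ((V0pow_hasDerivAt U k t x).mul (VV_hasDerivAt U (m + 1) t x)).add
    (SP_hasDerivAt U (RL k m) t x)
  refine HasDerivAt.congr_deriv (f := NL U k m t) h ?_
  simp only [NL, RL, SP_append, SP_map_cons]
  ring

lemma WW_eq {U : ℝ → SchwartzMap ℝ ℝ} {k : ℕ} {T : ℝ} (hU : Sol k T U) (m : ℕ) {t : ℝ}
    (ht : t ∈ Icc 0 T) (x : ℝ) : WW U m t x = - VV U (m + 3) t x - NL U k m t x := by
  induction m generalizing x with
  | zero => rw [hU.2 t ht x]; simp [NL, RL, SP_nil]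
  | succ m ih =>
    have h1 := WW_hasDerivAt_x hU.1 m t x
    have e : WW U m t = fun x => - VV U (m + 3) t x - NL U k m t x := funext ih
    rw [e] at h1
    have h2 := (VV_hasDerivAt U (m + 3) t x).neg.sub (NL_hasDerivAt U k m t x)
    rw [h1.unique h2]

lemma NL_cont (U : ℝ → SchwartzMap ℝ ℝ) (k m : ℕ) (t : ℝ) : Continuous (NL U k m t) :=
  continuous_iff_continuousAt.2 fun x => (NL_hasDerivAt U k m t x).continuousAt

lemma PP_sup (U : ℝ → SchwartzMap ℝ ℝ) {M : ℕ} (l : List ℕ) (t x : ℝ)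
    (h : ∀ i ∈ l, i + 1 ≤ M) : PP U l t x ^ 2 ≤ HH U M t ^ l.length := by
  induction l with
  | nil => simp [PP_nil]
  | cons a l ih =>
    simp only [List.mem_cons, forall_eq_or_imp] at h
    rw [PP_cons, mul_pow, List.length_cons, pow_succ, mul_comm]
    exact mul_le_mul (ih h.2) (VV_sup U h.1 t x) (sq_nonneg _) (pow_nonneg (HH_nonneg _ _ _) _)

lemma PP_erase (U : ℝ → SchwartzMap ℝ ℝ) {l : List ℕ} {i : ℕ} (h : i ∈ l) (t x : ℝ) :
    PP U l t x = PP U (l.erase i) t x * VV U i t x := by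
  unfold PP
  rw [mul_comm]
  exact (List.prod_map_erase (fun i => VV U i t x) h).symm

lemma PP_L2 (U : ℝ → SchwartzMap ℝ ℝ) {M : ℕ} {l : List ℕ} {i n : ℕ} (hi : i ∈ l) {t X : ℝ}
    (hl : l.length = n + 1)
    (hX : L2b (VV U i t) X) (h : ∀ j ∈ l.erase i, j + 1 ≤ M) :
    L2b (PP U l t) (HH U M t ^ n * X) := by
  have e : PP U l t = fun x => PP U (l.erase i) t x * VV U i t x := by
    ext x; exact PP_erase U hi t x
  rw [e]
  have hlen : (l.erase i).length = n := by rw [List.length_erase_of_mem hi, hl]; rfl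
  refine L2b.bmul (PP_cont U _ t) (fun x => ?_) hX
  have := PP_sup U (l.erase i) t x h
  rwa [hlen] at this

lemma VV_L2b_HH (U : ℝ → SchwartzMap ℝ ℝ) {j M : ℕ} (h : j ≤ M) (t : ℝ) :
    L2b (VV U j t) (HH U M t) := (VV_L2b U j t).mono (yy_le_HH U h t)

lemma monoA (U : ℝ → SchwartzMap ℝ ℝ) {k N : ℕ} (hN : 2 ≤ N) {l : List ℕ}
    (h1 : l.length = k + 1) (h2 : l.sum ≤ N + 1) (h3 : ∀ i ∈ l, i ≤ N) (t : ℝ) :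
    L2b (PP U l t) (HH U N t ^ (k + 1)) := by
  rw [pow_succ]
  by_cases hm : N ∈ l
  · refine PP_L2 U hm h1 (VV_L2b_HH U le_rfl t) (fun j hj => ?_)
    have hs := List.sum_erase hm
    have := List.single_le_sum (fun _ _ => Nat.zero_le _) j hj
    omega
  · obtain ⟨a, l', rfl⟩ := List.exists_cons_of_length_eq_add_one h1
    refine PP_L2 U (i := a) (by simp) h1 (VV_L2b_HH U (h3 a (by simp)) t) (fun j hj => ?_)
    have hj' := List.mem_of_mem_erase hj
    have := h3 j hj'
    have : j ≠ N := fun h => hm (h ▸ hj')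
    omega

lemma monoB (U : ℝ → SchwartzMap ℝ ℝ) {k m : ℕ} (hm : 3 ≤ m) {l : List ℕ}
    (hl : GoodL k m l) (t : ℝ) :
    L2b (PP U l t) (HH U (m - 1) t ^ k * HH U m t) := by
  obtain ⟨h1, h2, h3⟩ := hl
  have hmono : HH U (m - 1) t ≤ HH U m t := HH_mono U (by omega) t
  have hA := HH_nonneg U (m - 1) t
  have hle : HH U (m - 1) t ^ k * HH U (m - 1) t ≤ HH U (m - 1) t ^ k * HH U m t :=
    mul_le_mul_of_nonneg_left hmono (pow_nonneg hA _)
  by_cases hm1 : m ∈ l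
  · refine PP_L2 U hm1 h1 (VV_L2b_HH U le_rfl t) (fun j hj => ?_)
    have hs := List.sum_erase hm1
    have := List.single_le_sum (fun _ _ => Nat.zero_le _) j hj
    omega
  by_cases hm2 : m - 1 ∈ l
  · have hs := List.sum_erase hm2
    by_cases hbad : ∀ j ∈ l.erase (m - 1), j + 1 ≤ m - 1
    · exact (PP_L2 U hm2 h1 (VV_L2b_HH U le_rfl t) hbad).mono hle
    · push Not at hbad
      obtain ⟨j, hj, hjm⟩ := hbad
      have hs2 := List.sum_erase hj
      have hj3 := List.single_le_sum (fun _ _ => Nat.zero_le _) j hj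
      have hm3 : m = 3 := by omega
      subst hm3
      have hlen : (l.erase 2).length = k := by rw [List.length_erase_of_mem hm2, h1]; rfl
      obtain ⟨k', rfl⟩ : ∃ k', k = k' + 1 := by
        have := List.length_pos_of_mem hj
        have h5 : (l.erase (3 - 1)).length = k := hlen
        exact ⟨k - 1, by omega⟩
      have hj2 : j = 2 := by omega
      subst hj2
      have hin : L2b (PP U (l.erase 2) t) (HH U 2 t ^ k' * HH U 2 t) := by
        refine PP_L2 U hj hlen (VV_L2b_HH U le_rfl t) (fun i hi => ?_)
        have h7 : i ≤ ((l.erase 2).erase 2).sum :=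
          List.single_le_sum (fun _ _ => Nat.zero_le _) i hi
        have h8 : 2 + ((l.erase 2).erase 2).sum = (l.erase 2).sum := hs2
        have h9 : 2 + (l.erase 2).sum = l.sum := hs
        omega
      have e : PP U l t = fun x => VV U 2 t x * PP U (l.erase 2) t x := by
        ext x; rw [mul_comm]; exact PP_erase U hm2 t x
      rw [e]
      have := L2b.bmul (VV_cont U 2 t) (fun x => VV_sup U (le_refl 3) t x) hin
      refine this.mono (le_of_eq ?_)
      change _ = HH U 2 t ^ (k' + 1) * _
      ring
  · obtain ⟨a, l', rfl⟩ := List.exists_cons_of_length_eq_add_one h1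
    have hall : ∀ j ∈ a :: l', j + 1 ≤ m - 1 := by
      intro j hj
      have := h3 j hj
      have h5 : j ≠ m := fun h => hm1 (h ▸ hj)
      have h6 : j ≠ m - 1 := fun h => hm2 (h ▸ hj)
      omega
    refine (PP_L2 U (i := a) (by simp) h1 (VV_L2b_HH U ?_ t) (fun j hj => ?_)).mono hle
    · have := hall a (by simp); omega
    · exact hall j (List.mem_of_mem_erase hj)

lemma SP_L2 (U : ℝ → SchwartzMap ℝ ℝ) (L : List (List ℕ)) {t X : ℝ} (hX : 0 ≤ X)
    (h : ∀ l ∈ L, L2b (PP U l t) X) : L2b (SP U L t) (4 ^ L.length * X) := by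
  induction L with
  | nil =>
    have e : SP U [] t = fun _ => 0 := by ext x; exact SP_nil U t x
    rw [e]
    exact ⟨continuous_const, by simp, by simpa using hX⟩
  | cons l L ih =>
    simp only [List.mem_cons, forall_eq_or_imp] at h
    have e : SP U (l :: L) t = fun x => PP U l t x + SP U L t x := by ext x; exact SP_cons U l L t x
    rw [e]
    refine (h.1.add (ih h.2)).mono ?_
    rw [List.length_cons, pow_succ]
    have : (1:ℝ) ≤ 4 ^ L.length := one_le_pow₀ (by norm_num)
    nlinarith

end PartA5

section PartA6
open Filter Topology Set

structure L1b (g : ℝ → ℝ) (X : ℝ) : Prop where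
  cont : Continuous g
  int : Integrable g
  le : ∫ x, |g x| ≤ X

lemma L1b.mono {g : ℝ → ℝ} {X Y : ℝ} (h : L1b g X) (hXY : X ≤ Y) : L1b g Y :=
  ⟨h.cont, h.int, h.le.trans hXY⟩

lemma L1b.congr {f g : ℝ → ℝ} {X : ℝ} (h : L1b f X) (e : ∀ x, g x = f x) : L1b g X := by
  have : g = f := funext e
  rw [this]; exact h

lemma L1b.add {g h : ℝ → ℝ} {X Y : ℝ} (hg : L1b g X) (hh : L1b h Y) :
    L1b (fun x => g x + h x) (X + Y) := by
  refine ⟨hg.cont.add hh.cont, hg.int.add hh.int, ?_⟩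
  calc ∫ x, |g x + h x| ≤ ∫ x, (|g x| + |h x|) :=
        integral_mono (hg.int.add hh.int).abs (hg.int.abs.add hh.int.abs) fun x => abs_add_le _ _
    _ = (∫ x, |g x|) + ∫ x, |h x| := integral_add hg.int.abs hh.int.abs
    _ ≤ X + Y := add_le_add hg.le hh.le

lemma L1b.cmul {g : ℝ → ℝ} {X : ℝ} (c : ℝ) (hg : L1b g X) : L1b (fun x => c * g x) (|c| * X) := by
  refine ⟨continuous_const.mul hg.cont, hg.int.const_mul c, ?_⟩
  simp_rw [abs_mul]
  rw [integral_const_mul]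
  exact mul_le_mul_of_nonneg_left hg.le (abs_nonneg c)

lemma L1b.nonneg {g : ℝ → ℝ} {X : ℝ} (h : L1b g X) : 0 ≤ X :=
  le_trans (integral_nonneg fun _ => abs_nonneg _) h.le

lemma L2b.l1 {g h : ℝ → ℝ} {X Y : ℝ} (hg : L2b g X) (hh : L2b h Y) {l : ℝ} (hl : 0 < l) :
    L1b (fun x => g x * h x) ((l * X + Y / l) / 2) :=
  ⟨hg.cont.mul hh.cont, hg.integrable_mul hh, hg.mul_le hh hl⟩

lemma L1b.abs_integral_le {g : ℝ → ℝ} {X : ℝ} (h : L1b g X) : |∫ x, g x| ≤ X :=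
  (abs_integral_le_integral_abs).trans h.le

lemma flux_lemma' {c d : ℝ} (hcd : c ≤ d) (e e' g q1 q2 q2' : ℝ → ℝ → ℝ) {B K1 K2 : ℝ}
    (he' : Continuous (fun p : ℝ × ℝ => e' p.1 p.2))
    (hec : ∀ t, Continuous (e t))
    (hd : ∀ t x, HasDerivAt (fun τ => e τ x) (e' t x) t)
    (hq2 : ∀ t ∈ Icc c d, ∀ x, HasDerivAt (q2 t) (q2' t x) x)
    (hq : ∀ t ∈ Icc c d, ∀ x, HasDerivAt (fun x => q1 t x + q2' t x) (e' t x - g t x) x)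
    (hq2c : ∀ t ∈ Icc c d, Continuous (q2' t))
    (hg : ∀ t ∈ Icc c d, L1b (g t) B)
    (hq1 : ∀ t ∈ Icc c d, L1b (q1 t) K1)
    (hq2b : ∀ t ∈ Icc c d, L1b (q2 t) K2)
    (hi : ∀ t, Integrable (e t)) :
    |(∫ x, e d x) - ∫ x, e c x| ≤ B * (d - c) :=
  flux_lemma (K := max K1 K2) hcd e e' g q1 q2 q2' he' hec hd hq2 hq (fun t ht => (hg t ht).cont)
    (fun t ht => (hq1 t ht).cont) hq2c (fun t ht => (hg t ht).int) (fun t ht => (hg t ht).le)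
    (fun t ht => (hq1 t ht).int) (fun t ht => (hq1 t ht).le.trans (le_max_left _ _))
    (fun t ht => (hq2b t ht).int) (fun t ht => (hq2b t ht).le.trans (le_max_right _ _)) (hi c) (hi d)

/-- difference quotient -/
noncomputable def dq (h : ℝ) (f : ℝ → ℝ) (x : ℝ) : ℝ := (f (x + h) - f x) / h

lemma dq_hasDerivAt {f f' : ℝ → ℝ} (h : ℝ) (hf : ∀ x, HasDerivAt f (f' x) x) (x : ℝ) :
    HasDerivAt (dq h f) (dq h f' x) x :=
  (((hf (x + h)).comp_add_const x h).sub (hf x)).div_const h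

lemma dq_abs_le {f f' : ℝ → ℝ} {h β : ℝ} (hh : 0 < h) (hf : ∀ x, HasDerivAt f (f' x) x)
    (hb : ∀ x, |f' x| ≤ β) (x : ℝ) : |dq h f x| ≤ β := by
  have := Convex.norm_image_sub_le_of_norm_hasDerivWithin_le (f := f) (f' := f') (C := β)
    (s := univ) (x := x) (y := x + h) (fun y _ => (hf y).hasDerivWithinAt) (fun y _ => hb y)
    convex_univ (mem_univ _) (mem_univ _)
  rw [add_sub_cancel_left, Real.norm_eq_abs, Real.norm_eq_abs, abs_of_pos hh] at this
  unfold dq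
  rw [abs_div, abs_of_pos hh, div_le_iff₀ hh]
  exact this

lemma dq_energy {k : ℕ} {T : ℝ} {U : ℝ → SchwartzMap ℝ ℝ} (hU : Sol k T U) (j : ℕ) {c d : ℝ}
    (hcd : c ≤ d) (hc0 : 0 ≤ c) (hdT : d ≤ T) {β Y Z κ l : ℝ} (hβ : 0 < β) (hl : 0 < l)
    (hV : ∀ t ∈ Icc c d, L2b (VV U (j + 1) t) Y)
    (hκ : ∀ t ∈ Icc c d, ∀ x, (VV U 0 t x ^ k) ^ 2 ≤ κ)
    (hb : ∀ t ∈ Icc c d, ∀ x, |SP U (incL (List.replicate k 0)) t x| ≤ β)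
    (hZ : ∀ t ∈ Icc c d, L2b (SP U ((RL k j).flatMap incL) t) Z) :
    |yy U (j + 1) d - yy U (j + 1) c| ≤ (3 * β * Y + l * Y + Z / l) * (d - c) := by
  have main : ∀ h : ℝ, 0 < h → |(∫ x, dq h (VV U j d) x ^ 2) - ∫ x, dq h (VV U j c) x ^ 2| ≤
      (3 * β * Y + l * Y + Z / l) * (d - c) := by
    intro h hh
    have hh0 : h ≠ 0 := hh.ne'
    -- abbreviations
    have hzd : ∀ i t x, HasDerivAt (dq h (VV U i t)) (dq h (VV U (i + 1) t) x) x :=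
      fun i t x => dq_hasDerivAt h (fun x => VV_hasDerivAt U i t x) x
    have hzc : ∀ i t, Continuous (dq h (VV U i t)) := fun i t =>
      continuous_iff_continuousAt.2 fun x => (hzd i t x).continuousAt
    have hzL : ∀ t ∈ Icc c d, L2b (dq h (VV U j t)) Y := fun t ht =>
      (hV t ht).diffq (fun x => VV_hasDerivAt U j t x) hh0
    have hz1L : ∀ t ∈ Icc c d, L2b (dq h (VV U (j + 1) t)) ((1 / h) ^ 2 * (2 * Y + 2 * Y)) := by
      intro t ht
      have h1 := (((hV t ht).shift h).sub (hV t ht)).cmul (1 / h)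
      have e : dq h (VV U (j + 1) t) = fun x => 1 / h * (VV U (j + 1) t (x + h) - VV U (j + 1) t x) := by
        ext x; unfold dq; ring
      rw [e]; exact h1
    have hP : ∀ t x, HasDerivAt (fun x => VV U 0 t x ^ k) (SP U (incL (List.replicate k 0)) t x) x :=
      fun t x => V0pow_hasDerivAt U k t x
    have hPc : ∀ t, Continuous (fun x => VV U 0 t x ^ k) := fun t => (VV_cont U 0 t).pow k
    have hP'c : ∀ t, Continuous (SP U (incL (List.replicate k 0)) t) := fun t =>
      continuous_iff_continuousAt.2 fun x => (SP_hasDerivAt U _ t x).continuousAt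
    have hdqP : ∀ t ∈ Icc c d, L2b (fun x => dq h (fun x => VV U 0 t x ^ k) x * VV U (j + 1) t (x + h))
        (β ^ 2 * Y) := by
      intro t ht
      refine L2b.bmul ?_ (fun x => ?_) ((hV t ht).shift h)
      · exact continuous_iff_continuousAt.2 fun x => (dq_hasDerivAt h (hP t) x).continuousAt
      · have := dq_abs_le hh (hP t) (hb t ht) x
        rw [← sq_abs]
        exact pow_le_pow_left₀ (abs_nonneg _) this 2
    have hdqR : ∀ t ∈ Icc c d, L2b (dq h (SP U (RL k j) t)) Z := fun t ht =>
      (hZ t ht).diffq (fun x => SP_hasDerivAt U _ t x) hh0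
    have htr : ∀ i, Continuous (fun p : ℝ × ℝ => dq h (VV U i p.1) p.2) := by
      intro i
      unfold dq
      refine Continuous.div_const (Continuous.sub ?_ (VV_jcont hU.1 i)) h
      exact (VV_jcont hU.1 i).comp (f := fun p : ℝ × ℝ => (p.1, p.2 + h)) (by fun_prop)
    have htr' : Continuous (fun p : ℝ × ℝ => dq h (WW U j p.1) p.2) := by
      unfold dq
      refine Continuous.div_const (Continuous.sub ?_ (WW_jcont hU.1 j)) h
      exact (WW_jcont hU.1 j).comp (f := fun p : ℝ × ℝ => (p.1, p.2 + h)) (by fun_prop)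
    refine flux_lemma' (K1 := 3 * (((1:ℝ) * ((1 / h) ^ 2 * (2 * Y + 2 * Y)) +
        ((1 / h) ^ 2 * (2 * Y + 2 * Y)) / 1) / 2) + 1 * (((1:ℝ) * (κ * Y) + Y / 1) / 2))
      (K2 := 2 * (((1:ℝ) * Y + ((1 / h) ^ 2 * (2 * Y + 2 * Y)) / 1) / 2)) hcd
      (fun t x => dq h (VV U j t) x ^ 2) (fun t x => 2 * dq h (VV U j t) x * dq h (WW U j t) x)
      (fun t x => SP U (incL (List.replicate k 0)) t x * dq h (VV U j t) x * dq h (VV U j t) x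
        + (-2) * (dq h (VV U j t) x * (dq h (fun x => VV U 0 t x ^ k) x * VV U (j + 1) t (x + h)))
        + (-2) * (dq h (VV U j t) x * dq h (SP U (RL k j) t) x))
      (fun t x => 3 * (dq h (VV U (j + 1) t) x * dq h (VV U (j + 1) t) x)
        + (-1) * ((VV U 0 t x ^ k * dq h (VV U j t) x) * dq h (VV U j t) x))
      (fun t x => (-2) * (dq h (VV U j t) x * dq h (VV U (j + 1) t) x))
      (fun t x => (-2) * (dq h (VV U (j + 1) t) x * dq h (VV U (j + 1) t) x
        + dq h (VV U j t) x * dq h (VV U (j + 2) t) x)) ?_ ?_ ?_ ?_ ?_ ?_ ?_ ?_ ?_ ?_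
    · exact (continuous_const.mul (htr j)).mul htr'
    · exact fun t => (hzc j t).pow 2
    · intro t x
      have h1 : HasDerivAt (fun τ => dq h (VV U j τ) x) (dq h (WW U j t) x) t :=
        ((WW_hasDerivAt_t hU.1 j t (x + h)).sub (WW_hasDerivAt_t hU.1 j t x)).div_const h
      exact (h1.pow 2).congr_deriv (by push_cast; ring)
    · intro t _ x
      exact ((hzd j t x).mul (hzd (j + 1) t x)).const_mul (-2)
    · intro t ht x
      have h1 := (((hzd (j + 1) t x).mul (hzd (j + 1) t x)).const_mul 3).add
        ((((hP t x).mul (hzd j t x)).mul (hzd j t x)).const_mul (-1))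
      have h2 := (((hzd (j + 1) t x).mul (hzd (j + 1) t x)).add
        ((hzd j t x).mul (hzd (j + 2) t x))).const_mul (-2)
      have h3 := h1.add h2
      refine h3.congr_deriv ?_
      have hT : t ∈ Icc 0 T := ⟨hc0.trans ht.1, ht.2.trans hdT⟩
      have e1 : dq h (WW U j t) x = - dq h (VV U (j + 3) t) x
          - VV U 0 t x ^ k * dq h (VV U (j + 1) t) x
          - dq h (fun x => VV U 0 t x ^ k) x * VV U (j + 1) t (x + h)
          - dq h (SP U (RL k j) t) x := by
        unfold dq
        rw [WW_eq hU j hT, WW_eq hU j hT]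
        simp only [NL]
        ring
      rw [e1]
      simp only [Pi.mul_apply]
      ring
    · intro t _
      exact continuous_const.mul (((hzc _ t).mul (hzc _ t)).add ((hzc _ t).mul (hzc _ t)))
    · intro t ht
      have hz := hzL t ht
      have t1 : L1b (fun x => SP U (incL (List.replicate k 0)) t x * dq h (VV U j t) x * dq h (VV U j t) x)
          (((1 / β) * (β ^ 2 * Y) + Y / (1 / β)) / 2) := by
        refine (L2b.bmul (hP'c t) (fun x => ?_) hz).l1 hz (by positivity)
        rw [← sq_abs]
        exact pow_le_pow_left₀ (abs_nonneg _) (hb t ht x) 2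
      have t2 := ((hz.l1 (hdqP t ht) hβ).cmul (-2))
      have t3 := ((hz.l1 (hdqR t ht) hl).cmul (-2))
      refine ((t1.add t2).add t3).mono (le_of_eq ?_)
      rw [abs_neg, abs_two]
      field_simp
      ring
    · intro t ht
      have hz := hzL t ht
      have hz1 := hz1L t ht
      have := ((hz1.l1 hz1 one_pos).cmul 3).add
        (((L2b.bmul (hPc t) (hκ t ht) hz).l1 hz one_pos).cmul (-1))
      refine this.mono (le_of_eq ?_)
      norm_num
    · intro t ht
      have := ((hzL t ht).l1 (hz1L t ht) one_pos).cmul (-2)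
      refine this.mono (le_of_eq ?_)
      norm_num
    · intro t
      exact ((VV_L2b U (j + 1) t).diffq (fun x => VV_hasDerivAt U j t x) hh0).int
  have hone : ∀ t t', (∀ h : ℝ, 0 < h → (∫ x, dq h (VV U j t) x ^ 2) ≤
      (∫ x, dq h (VV U j t') x ^ 2) + (3 * β * Y + l * Y + Z / l) * (d - c)) →
      yy U (j + 1) t ≤ yy U (j + 1) t' + (3 * β * Y + l * Y + Z / l) * (d - c) := by
    intro t t' H
    refine integral_sq_deriv_le_of_diffq (fun x => VV_hasDerivAt U j t x) (VV_cont U _ t)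
      (VV_L2b U (j + 1) t).int (fun h hh => ?_)
    have h1 := (VV_L2b U (j + 1) t).diffq (fun x => VV_hasDerivAt U j t x) hh.ne'
    have h2 := (VV_L2b U (j + 1) t').diffq (fun x => VV_hasDerivAt U j t' x) hh.ne'
    refine ⟨h1.cont, h1.int, (H h hh).trans ?_⟩
    have := h2.le
    unfold dq
    linarith
  rw [abs_le]
  have m1 := hone d c (fun h hh => by have := (abs_le.1 (main h hh)).2; linarith)
  have m2 := hone c d (fun h hh => by have := (abs_le.1 (main h hh)).1; linarith)
  constructor <;> linarith

end PartA6

section PartA7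
open Filter Topology Set

lemma SP_pow (U : ℝ → SchwartzMap ℝ ℝ) (j : ℕ) (t x : ℝ) :
    SP U (incL (List.replicate (j + 1) 0)) t x = (j + 1) * VV U 0 t x ^ j * VV U 1 t x := by
  have h1 := V0pow_hasDerivAt U (j + 1) t x
  have h2 := (VV_hasDerivAt U 0 t x).pow (j + 1)
  rw [h1.unique h2]
  simp

lemma NL_zero (U : ℝ → SchwartzMap ℝ ℝ) (k : ℕ) (t x : ℝ) :
    NL U k 0 t x = VV U 0 t x ^ k * VV U 1 t x := by simp [NL, RL, SP_nil]

lemma NL_one (U : ℝ → SchwartzMap ℝ ℝ) (j : ℕ) (t x : ℝ) :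
    NL U (j + 1) 1 t x = VV U 0 t x ^ (j + 1) * VV U 2 t x
      + (j + 1) * VV U 0 t x ^ j * VV U 1 t x ^ 2 := by
  simp only [NL, RL, List.flatMap_nil, List.nil_append, SP_map_cons, SP_pow]
  ring

lemma NL_two (U : ℝ → SchwartzMap ℝ ℝ) (j : ℕ) (t x : ℝ) :
    NL U (j + 1) 2 t x = VV U 0 t x ^ (j + 1) * VV U 3 t x
      + 3 * (j + 1) * VV U 0 t x ^ j * VV U 1 t x * VV U 2 t x
      + (j + 1) * (j * VV U 0 t x ^ (j - 1)) * VV U 1 t x ^ 3 := by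
  have h1 := NL_hasDerivAt U (j + 1) 1 t x
  have e : NL U (j + 1) 1 t = fun x => VV U 0 t x ^ (j + 1) * VV U 2 t x
      + (j + 1) * VV U 0 t x ^ j * VV U 1 t x ^ 2 := funext fun x => NL_one U j t x
  rw [e] at h1
  have v0 := VV_hasDerivAt U 0 t x
  have v1 := VV_hasDerivAt U 1 t x
  have v2 := VV_hasDerivAt U 2 t x
  have h2 := ((v0.pow (j + 1)).mul v2).add (((v0.pow j).const_mul ((j : ℝ) + 1)).mul (v1.pow 2))
  rw [h1.unique h2]
  simp only [Pi.pow_apply]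
  push_cast
  simp
  ring

lemma V0pow_sq_le (U : ℝ → SchwartzMap ℝ ℝ) {M : ℕ} (hM : 1 ≤ M) {t X : ℝ} (hX : HH U M t ≤ X)
    (n : ℕ) (x : ℝ) : (VV U 0 t x ^ n) ^ 2 ≤ X ^ n := by
  rw [← pow_mul, mul_comm, pow_mul]
  exact pow_le_pow_left₀ (sq_nonneg _) ((VV_sup U hM t x).trans hX) n

lemma VV_L2b_le (U : ℝ → SchwartzMap ℝ ℝ) {M i : ℕ} (hM : i ≤ M) {t X : ℝ} (hX : HH U M t ≤ X) :
    L2b (VV U i t) X := (VV_L2b_HH U hM t).mono hX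

lemma mass_const {k : ℕ} {T : ℝ} {U : ℝ → SchwartzMap ℝ ℝ} (hU : Sol k T U) {c d X : ℝ}
    (hcd : c ≤ d) (hc0 : 0 ≤ c) (hdT : d ≤ T) (hX : ∀ t ∈ Icc c d, HH U 1 t ≤ X) :
    yy U 0 d = yy U 0 c := by
  have hq1 : ∃ K, ∀ t ∈ Icc c d, L1b (fun x => 3 * (VV U 1 t x * VV U 1 t x)
      + (-(2 / (k + 2))) * ((VV U 0 t x ^ k * VV U 0 t x) * VV U 0 t x)) K :=
    ⟨_, fun t ht => ((((VV_L2b_le U (le_refl 1) (hX t ht)).l1 (VV_L2b_le U (le_refl 1) (hX t ht))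
      one_pos).cmul 3).add (((L2b.bmul ((VV_cont U 0 t).pow k)
        (V0pow_sq_le U le_rfl (hX t ht) k) (VV_L2b_le U (Nat.zero_le _) (hX t ht))).l1
        (VV_L2b_le U (Nat.zero_le _) (hX t ht)) one_pos).cmul _))⟩
  have hq2 : ∃ K, ∀ t ∈ Icc c d, L1b (fun x => (-2) * (VV U 0 t x * VV U 1 t x)) K :=
    ⟨_, fun t ht => ((VV_L2b_le U (Nat.zero_le _) (hX t ht)).l1 (VV_L2b_le U (le_refl 1) (hX t ht))
      one_pos).cmul _⟩
  obtain ⟨K1, hq1⟩ := hq1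
  obtain ⟨K2, hq2⟩ := hq2
  have := flux_lemma' (B := 0) hcd (fun t x => VV U 0 t x ^ 2)
    (fun t x => 2 * VV U 0 t x * WW U 0 t x) (fun _ _ => 0) _ _
    (fun t x => (-2) * (VV U 1 t x * VV U 1 t x + VV U 0 t x * VV U 2 t x))
    ?_ ?_ ?_ ?_ ?_ ?_ ?_ hq1 hq2 ?_
  · rw [zero_mul, abs_nonpos_iff, sub_eq_zero] at this
    exact this
  · exact (continuous_const.mul (VV_jcont hU.1 0)).mul (WW_jcont hU.1 0)
  · exact fun t => (VV_cont U 0 t).pow 2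
  · intro t x
    exact ((WW_hasDerivAt_t hU.1 0 t x).pow 2).congr_deriv (by push_cast; ring)
  · intro t _ x
    exact ((VV_hasDerivAt U 0 t x).mul (VV_hasDerivAt U 1 t x)).const_mul (-2)
  · intro t ht x
    have v0 := VV_hasDerivAt U 0 t x
    have v1 := VV_hasDerivAt U 1 t x
    have v2 := VV_hasDerivAt U 2 t x
    have h3 := (((v1.mul v1).const_mul 3).add ((((v0.pow k).mul v0).mul v0).const_mul
      (-(2 / ((k:ℝ) + 2))))).add (((v1.mul v1).add (v0.mul v2)).const_mul (-2))
    refine h3.congr_deriv ?_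
    rw [WW_eq hU 0 ⟨hc0.trans ht.1, ht.2.trans hdT⟩, NL_zero]
    simp only [Pi.mul_apply, Pi.pow_apply]
    rcases k with _ | j
    · simp; ring
    · simp only [Nat.add_sub_cancel]
      push_cast
      field_simp
      ring
  · intro t _
    exact continuous_const.mul (((VV_cont U 1 t).mul (VV_cont U 1 t)).add
      ((VV_cont U 0 t).mul (VV_cont U 2 t)))
  · intro t _
    exact ⟨continuous_const, by simp, by simp⟩
  · intro t
    exact (VV_L2b U 0 t).int

noncomputable def E1 (U : ℝ → SchwartzMap ℝ ℝ) (k : ℕ) (t : ℝ) : ℝ :=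
  ∫ x, (VV U 1 t x * VV U 1 t x
    + (-(2 / ((k + 1) * (k + 2)))) * ((VV U 0 t x ^ k * VV U 0 t x) * VV U 0 t x))

lemma energy_const {j : ℕ} {T : ℝ} {U : ℝ → SchwartzMap ℝ ℝ} (hU : Sol (j + 1) T U) {c d X : ℝ}
    (hcd : c ≤ d) (hc0 : 0 ≤ c) (hdT : d ≤ T) (hX : ∀ t ∈ Icc c d, HH U 2 t ≤ X) :
    E1 U (j + 1) d = E1 U (j + 1) c := by
  have hL : ∀ t ∈ Icc c d, ∀ i ≤ 2, L2b (VV U i t) X := fun t ht i hi => VV_L2b_le U hi (hX t ht)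
  have hP : ∀ t ∈ Icc c d, ∀ (n : ℕ) x, (VV U 0 t x ^ n) ^ 2 ≤ X ^ n := fun t ht n x =>
    V0pow_sq_le U (by norm_num) (hX t ht) n x
  have hq1 : ∃ K, ∀ t ∈ Icc c d, L1b (fun x => 3 * (VV U 2 t x * VV U 2 t x)
      + (-2) * ((VV U 0 t x ^ (j + 1) * VV U 1 t x) * VV U 1 t x)
      + (2 / (j + 2)) * ((VV U 0 t x ^ (j + 1) * VV U 0 t x) * VV U 2 t x)
      + (1 / (j + 2) ^ 2) * ((VV U 0 t x ^ (2 * j + 2) * VV U 0 t x) * VV U 0 t x)) K :=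
    ⟨_, fun t ht => ((((((hL t ht 2 le_rfl).l1 (hL t ht 2 le_rfl) one_pos).cmul 3).add
      (((L2b.bmul ((VV_cont U 0 t).pow _) (hP t ht _) (hL t ht 1 (by norm_num))).l1
        (hL t ht 1 (by norm_num)) one_pos).cmul _)).add
      (((L2b.bmul ((VV_cont U 0 t).pow _) (hP t ht _) (hL t ht 0 (by norm_num))).l1
        (hL t ht 2 (by norm_num)) one_pos).cmul _)).add
      (((L2b.bmul ((VV_cont U 0 t).pow _) (hP t ht _) (hL t ht 0 (by norm_num))).l1
        (hL t ht 0 (by norm_num)) one_pos).cmul _))⟩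
  have hq2 : ∃ K, ∀ t ∈ Icc c d, L1b (fun x => (-2) * (VV U 1 t x * VV U 2 t x)) K :=
    ⟨_, fun t ht => ((hL t ht 1 (by norm_num)).l1 (hL t ht 2 le_rfl) one_pos).cmul _⟩
  obtain ⟨K1, hq1⟩ := hq1
  obtain ⟨K2, hq2⟩ := hq2
  have := flux_lemma' (B := 0) hcd (fun t x => VV U 1 t x * VV U 1 t x
    + (-(2 / (((j + 1 : ℕ) + 1) * ((j + 1 : ℕ) + 2)))) * ((VV U 0 t x ^ (j + 1) * VV U 0 t x) * VV U 0 t x))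
    (fun t x => 2 * VV U 1 t x * WW U 1 t x
      + (-(2 / (j + 2))) * (VV U 0 t x ^ (j + 2) * WW U 0 t x)) (fun _ _ => 0) _ _
    (fun t x => (-2) * (VV U 2 t x * VV U 2 t x + VV U 1 t x * VV U 3 t x))
    ?_ ?_ ?_ ?_ ?_ ?_ ?_ hq1 hq2 ?_
  · rw [zero_mul, abs_nonpos_iff, sub_eq_zero] at this
    exact this
  · exact ((continuous_const.mul (VV_jcont hU.1 1)).mul (WW_jcont hU.1 1)).add
      (continuous_const.mul (((VV_jcont hU.1 0).pow _).mul (WW_jcont hU.1 0)))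
  · exact fun t => ((VV_cont U 1 t).mul (VV_cont U 1 t)).add (continuous_const.mul
      ((((VV_cont U 0 t).pow _).mul (VV_cont U 0 t)).mul (VV_cont U 0 t)))
  · intro t x
    have w0 := WW_hasDerivAt_t hU.1 0 t x
    have w1 := WW_hasDerivAt_t hU.1 1 t x
    have h3 := (w1.mul w1).add ((((w0.pow (j + 1)).mul w0).mul w0).const_mul
      (-(2 / (((j + 1 : ℕ) + 1) * ((j + 1 : ℕ) + 2)) : ℝ)))
    refine h3.congr_deriv ?_
    simp only [Pi.mul_apply, Pi.pow_apply, Nat.add_sub_cancel]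
    push_cast
    field_simp
    ring
  · intro t _ x
    exact ((VV_hasDerivAt U 1 t x).mul (VV_hasDerivAt U 2 t x)).const_mul (-2)
  · intro t ht x
    have v0 := VV_hasDerivAt U 0 t x
    have v1 := VV_hasDerivAt U 1 t x
    have v2 := VV_hasDerivAt U 2 t x
    have v3 := VV_hasDerivAt U 3 t x
    have h3 := (((((v2.mul v2).const_mul 3).add
      ((((v0.pow (j + 1)).mul v1).mul v1).const_mul (-2))).add
      ((((v0.pow (j + 1)).mul v0).mul v2).const_mul (2 / ((j:ℝ) + 2)))).add
      ((((v0.pow (2 * j + 2)).mul v0).mul v0).const_mul (1 / ((j:ℝ) + 2) ^ 2))).add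
      (((v2.mul v2).add (v1.mul v3)).const_mul (-2))
    refine h3.congr_deriv ?_
    have hT : t ∈ Icc 0 T := ⟨hc0.trans ht.1, ht.2.trans hdT⟩
    rw [WW_eq hU 0 hT, WW_eq hU 1 hT, NL_zero, NL_one]
    simp only [Pi.mul_apply, Pi.pow_apply, Nat.add_sub_cancel,
      show 2 * j + 2 - 1 = 2 * j + 1 by omega]
    push_cast
    field_simp
    ring
  · intro t _
    exact continuous_const.mul (((VV_cont U 2 t).mul (VV_cont U 2 t)).add
      ((VV_cont U 1 t).mul (VV_cont U 3 t)))
  · intro t _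
    exact ⟨continuous_const, by simp, by simp⟩
  · intro t
    exact (((VV_L2b U 1 t).l1 (VV_L2b U 1 t) one_pos).add (((L2b.bmul ((VV_cont U 0 t).pow _)
      (V0pow_sq_le U (le_refl 1) (le_refl (HH U 1 t)) (j + 1)) (VV_L2b U 0 t)).l1 (VV_L2b U 0 t)
      one_pos).cmul _)).int

noncomputable def E2 (U : ℝ → SchwartzMap ℝ ℝ) (k : ℕ) (t : ℝ) : ℝ :=
  ∫ x, (VV U 2 t x * VV U 2 t x
    + (-(5 / 3)) * ((VV U 0 t x ^ k * VV U 1 t x) * VV U 1 t x))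

lemma E2_close (U : ℝ → SchwartzMap ℝ ℝ) (k : ℕ) {t a : ℝ} (ha : HH U 1 t ≤ a) :
    |yy U 2 t - E2 U k t| ≤ 5 / 3 * ((1 * (a ^ k * a) + a / 1) / 2) := by
  have h1 := VV_L2b_le U (le_refl 1) ha
  have h : L1b (fun x => (-(5 / 3)) * ((VV U 0 t x ^ k * VV U 1 t x) * VV U 1 t x)) _ :=
    (((L2b.bmul ((VV_cont U 0 t).pow k) (V0pow_sq_le U (le_refl 1) ha k) h1).l1 h1
    one_pos).cmul (-(5 / 3)))
  have e : yy U 2 t - E2 U k t = - ∫ x, (-(5 / 3)) * ((VV U 0 t x ^ k * VV U 1 t x) * VV U 1 t x) := by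
    unfold E2
    rw [integral_add ((VV_L2b U 2 t).integrable_mul (VV_L2b U 2 t)) h.int]
    have : yy U 2 t = ∫ x, VV U 2 t x * VV U 2 t x := by
      unfold yy; congr 1; ext x; ring
    rw [this]; ring
  rw [e, abs_neg]
  refine h.abs_integral_le.trans (le_of_eq ?_)
  rw [abs_neg, abs_of_pos (by norm_num)]

lemma mod_energy (j : ℕ) {a : ℝ} (ha0 : 0 ≤ a) : ∃ A : ℝ, 0 ≤ A ∧
    ∀ {T : ℝ} {U : ℝ → SchwartzMap ℝ ℝ} (_ : Sol (j + 1) T U) {c d X Y : ℝ}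
    (_ : c ≤ d) (_ : 0 ≤ c) (_ : d ≤ T) (_ : ∀ t ∈ Icc c d, HH U 3 t ≤ X)
    (_ : ∀ t ∈ Icc c d, HH U 1 t ≤ a) (_ : ∀ t ∈ Icc c d, yy U 2 t ≤ Y) (_ : 1 ≤ Y),
    |E2 U (j + 1) d - E2 U (j + 1) c| ≤ A * (1 + Y) * (d - c) := by
  set α : ℝ := |-(1 / 3) * (j + 1) * j| with hα
  set β : ℝ := |(5:ℝ) * (j + 1)| with hβ
  have hα0 : 0 ≤ α := abs_nonneg _
  have hβ0 : 0 ≤ β := abs_nonneg _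
  refine ⟨α * (a ^ (j - 1) * ((a + 1) ^ 2 * a) + 1) + β * (a ^ (2 * j + 1) * ((a + 1) * a) + a) +
    10 / 3 * (a ^ (2 * j + 2) * a + 1), by positivity, ?_⟩
  intro T U hU c d X Y hcd hc0 hdT hX ha hY hY1
  have hL : ∀ t ∈ Icc c d, ∀ i ≤ 3, L2b (VV U i t) X := fun t ht i hi => VV_L2b_le U hi (hX t ht)
  have hP : ∀ t ∈ Icc c d, ∀ (n : ℕ) x, (VV U 0 t x ^ n) ^ 2 ≤ X ^ n := fun t ht n x =>
    V0pow_sq_le U (by norm_num) (hX t ht) n x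
  have hPa : ∀ t ∈ Icc c d, ∀ (n : ℕ) x, (VV U 0 t x ^ n) ^ 2 ≤ a ^ n := fun t ht n x =>
    V0pow_sq_le U (by norm_num) (ha t ht) n x
  have hS1 : ∀ t ∈ Icc c d, ∀ x, VV U 1 t x ^ 2 ≤ X := fun t ht x =>
    (VV_sup U (by norm_num) t x).trans (hX t ht)
  have hq1 : ∃ K, ∀ t ∈ Icc c d, L1b (fun x => 3 * (VV U 3 t x * VV U 3 t x)
      + (-(8 / 3)) * ((VV U 0 t x ^ (j + 1) * VV U 2 t x) * VV U 2 t x)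
      + (10 / 3) * ((VV U 0 t x ^ (j + 1) * VV U 1 t x) * VV U 3 t x)
      + (-(5 / 3) * (j + 1)) * ((VV U 0 t x ^ j * (VV U 1 t x * VV U 1 t x)) * VV U 2 t x)) K :=
    ⟨_, fun t ht => ((((((hL t ht 3 le_rfl).l1 (hL t ht 3 le_rfl) one_pos).cmul 3).add
      (((L2b.bmul ((VV_cont U 0 t).pow _) (hP t ht _) (hL t ht 2 (by norm_num))).l1
        (hL t ht 2 (by norm_num)) one_pos).cmul _)).add
      (((L2b.bmul ((VV_cont U 0 t).pow _) (hP t ht _) (hL t ht 1 (by norm_num))).l1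
        (hL t ht 3 (by norm_num)) one_pos).cmul _)).add
      (((L2b.bmul ((VV_cont U 0 t).pow _) (hP t ht _) (L2b.bmul (VV_cont U 1 t) (hS1 t ht)
        (hL t ht 1 (by norm_num)))).l1
        (hL t ht 2 (by norm_num)) one_pos).cmul _))⟩
  have hq2 : ∃ K, ∀ t ∈ Icc c d, L1b (fun x => (-2) * (VV U 2 t x * VV U 3 t x)) K :=
    ⟨_, fun t ht => ((hL t ht 2 (by norm_num)).l1 (hL t ht 3 le_rfl) one_pos).cmul _⟩
  obtain ⟨K1, hq1⟩ := hq1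
  obtain ⟨K2, hq2⟩ := hq2
  set r := Real.sqrt Y with hr
  have hr0 : 0 < r := Real.sqrt_pos.2 (by linarith)
  have hr2 : r * r = Y := Real.mul_self_sqrt (by linarith)
  have hrY : r ≤ Y := by nlinarith
  have hg : ∀ t ∈ Icc c d, L1b (fun x =>
      (-(1 / 3) * (j + 1) * j) * ((VV U 0 t x ^ (j - 1) * (VV U 1 t x * (VV U 1 t x * VV U 1 t x))) * VV U 2 t x)
      + (5 * (j + 1)) * ((VV U 0 t x ^ (2 * j + 1) * (VV U 1 t x * VV U 1 t x)) * VV U 1 t x)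
      + (10 / 3) * ((VV U 0 t x ^ (2 * j + 2) * VV U 1 t x) * VV U 2 t x))
      ((α * (a ^ (j - 1) * ((a + 1) ^ 2 * a) + 1) + β * (a ^ (2 * j + 1) * ((a + 1) * a) + a) +
    10 / 3 * (a ^ (2 * j + 2) * a + 1)) * (1 + Y)) := by
    intro t ht
    have l1 := VV_L2b_le U (le_refl 1) (ha t ht)
    have l2 := (VV_L2b U 2 t).mono (hY t ht)
    have hs : ∀ x, VV U 1 t x ^ 2 ≤ r * (a + 1) := by
      intro x
      have := sup_sq_le (fun x => VV_hasDerivAt U 1 t x) l1 l2 hr0 x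
      have e : Y / r = r := by rw [← hr2]; field_simp
      rw [e] at this; linarith
    have p0 : ∀ n : ℕ, Continuous (fun x => VV U 0 t x ^ n) := fun n => (VV_cont U 0 t).pow n
    have c1 := VV_cont U 1 t
    have t1 := ((L2b.bmul (p0 _) (hPa t ht (j - 1)) (L2b.bmul c1 hs (L2b.bmul c1 hs l1))).l1 l2
      one_pos).cmul (-(1 / 3) * (j + 1) * j)
    have t2 := ((L2b.bmul (p0 _) (hPa t ht (2 * j + 1)) (L2b.bmul c1 hs l1)).l1 l1
      one_pos).cmul (5 * (j + 1))
    have t3 := ((L2b.bmul (p0 _) (hPa t ht (2 * j + 2)) l1).l1 l2 one_pos).cmul (10 / 3)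
    refine ((t1.add t2).add t3).mono ?_
    rw [← hα, ← hβ, abs_of_pos (by norm_num : (0:ℝ) < 10 / 3), add_mul, add_mul]
    have pa : ∀ n : ℕ, 0 ≤ a ^ n := fun n => pow_nonneg ha0 n
    refine add_le_add (add_le_add ?_ ?_) ?_
    · rw [mul_assoc α]
      refine mul_le_mul_of_nonneg_left ?_ hα0
      have e : r * (a + 1) * (r * (a + 1) * a) = Y * ((a + 1) ^ 2 * a) := by
        rw [← hr2]; ring
      rw [e]
      have : 0 ≤ a ^ (j - 1) * ((a + 1) ^ 2 * a) := by positivity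
      nlinarith
    · rw [mul_assoc β]
      refine mul_le_mul_of_nonneg_left ?_ hβ0
      have h1 : a ^ (2 * j + 1) * (r * (a + 1) * a) ≤ a ^ (2 * j + 1) * ((a + 1) * a) * Y := by
        have : 0 ≤ a ^ (2 * j + 1) * ((a + 1) * a) := by positivity
        nlinarith
      have : 0 ≤ a ^ (2 * j + 1) * ((a + 1) * a) := by positivity
      nlinarith
    · rw [mul_assoc (10 / 3 : ℝ)]
      refine mul_le_mul_of_nonneg_left ?_ (by norm_num)
      have : 0 ≤ a ^ (2 * j + 2) * a := by positivity
      nlinarith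
  refine flux_lemma' hcd (fun t x => VV U 2 t x * VV U 2 t x
    + (-(5 / 3)) * ((VV U 0 t x ^ (j + 1) * VV U 1 t x) * VV U 1 t x))
    (fun t x => 2 * VV U 2 t x * WW U 2 t x
      + (-(5 / 3)) * ((j + 1) * VV U 0 t x ^ j * WW U 0 t x * VV U 1 t x ^ 2
        + 2 * VV U 0 t x ^ (j + 1) * VV U 1 t x * WW U 1 t x)) _ _ _
    (fun t x => (-2) * (VV U 3 t x * VV U 3 t x + VV U 2 t x * VV U 4 t x))
    ?_ ?_ ?_ ?_ ?_ ?_ hg hq1 hq2 ?_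
  · have v0 := VV_jcont hU.1 0
    have v1 := VV_jcont hU.1 1
    have v2 := VV_jcont hU.1 2
    have w0 := WW_jcont hU.1 0
    have w1 := WW_jcont hU.1 1
    have w2 := WW_jcont hU.1 2
    exact ((continuous_const.mul v2).mul w2).add (continuous_const.mul
      ((((continuous_const.mul (v0.pow _)).mul w0).mul (v1.pow 2)).add
      (((continuous_const.mul (v0.pow _)).mul v1).mul w1)))
  · exact fun t => ((VV_cont U 2 t).mul (VV_cont U 2 t)).add (continuous_const.mul
      ((((VV_cont U 0 t).pow _).mul (VV_cont U 1 t)).mul (VV_cont U 1 t)))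
  · intro t x
    have w0 := WW_hasDerivAt_t hU.1 0 t x
    have w1 := WW_hasDerivAt_t hU.1 1 t x
    have w2 := WW_hasDerivAt_t hU.1 2 t x
    have h3 := (w2.mul w2).add ((((w0.pow (j + 1)).mul w1).mul w1).const_mul (-(5 / 3)))
    refine h3.congr_deriv ?_
    simp only [Pi.mul_apply, Pi.pow_apply, Nat.add_sub_cancel]
    push_cast
    ring
  · intro t _ x
    exact ((VV_hasDerivAt U 2 t x).mul (VV_hasDerivAt U 3 t x)).const_mul (-2)
  · intro t ht x
    have v0 := VV_hasDerivAt U 0 t x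
    have v1 := VV_hasDerivAt U 1 t x
    have v2 := VV_hasDerivAt U 2 t x
    have v3 := VV_hasDerivAt U 3 t x
    have v4 := VV_hasDerivAt U 4 t x
    have h3 := (((((v3.mul v3).const_mul 3).add
      ((((v0.pow (j + 1)).mul v2).mul v2).const_mul (-(8 / 3)))).add
      ((((v0.pow (j + 1)).mul v1).mul v3).const_mul (10 / 3))).add
      ((((v0.pow j).mul (v1.mul v1)).mul v2).const_mul (-(5 / 3) * ((j:ℝ) + 1)))).add
      (((v3.mul v3).add (v2.mul v4)).const_mul (-2))
    refine h3.congr_deriv ?_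
    have hT : t ∈ Icc 0 T := ⟨hc0.trans ht.1, ht.2.trans hdT⟩
    rw [WW_eq hU 0 hT, WW_eq hU 1 hT, WW_eq hU 2 hT, NL_zero, NL_one, NL_two]
    simp only [Pi.mul_apply, Pi.pow_apply, Nat.add_sub_cancel]
    push_cast
    ring
  · intro t _
    exact continuous_const.mul (((VV_cont U 3 t).mul (VV_cont U 3 t)).add
      ((VV_cont U 2 t).mul (VV_cont U 4 t)))
  · intro t
    exact (((VV_L2b U 2 t).l1 (VV_L2b U 2 t) one_pos).add (((L2b.bmul ((VV_cont U 0 t).pow _)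
      (V0pow_sq_le U (le_refl 1) (le_refl (HH U 1 t)) (j + 1)) (VV_L2b U 1 t)).l1 (VV_L2b U 1 t)
      one_pos).cmul _)).int

end PartA7

section PartA8
open Filter Topology Set

lemma powder_le (U : ℝ → SchwartzMap ℝ ℝ) (j : ℕ) {N : ℕ} (hN : 2 ≤ N) {t ν : ℝ} (hν : 0 < ν)
    (h : HH U N t ≤ ν ^ 2) (x : ℝ) :
    |SP U (incL (List.replicate (j + 1) 0)) t x| ≤ (j + 1) * ν ^ (j + 1) := by
  rw [SP_pow, mul_assoc, abs_mul, abs_of_nonneg (by positivity : (0:ℝ) ≤ (j:ℝ) + 1)]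
  refine mul_le_mul_of_nonneg_left ?_ (by positivity)
  refine abs_le_of_sq_le_sq ?_ (by positivity)
  rw [mul_pow]
  have h1 := V0pow_sq_le U (by omega : 1 ≤ N) h j x
  have h2 := (VV_sup U (j := 1) hN t x).trans h
  calc _ ≤ (ν ^ 2) ^ j * ν ^ 2 := mul_le_mul h1 h2 (sq_nonneg _) (by positivity)
    _ = (ν ^ (j + 1)) ^ 2 := by ring

lemma HH_lip (j N : ℕ) (hN : 2 ≤ N) : ∃ D : ℝ, 0 < D ∧
    ∀ {T : ℝ} {U : ℝ → SchwartzMap ℝ ℝ} (_ : Sol (j + 1) T U) {c d ν : ℝ} (_ : 0 < ν)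
    (_ : c ≤ d) (_ : 0 ≤ c) (_ : d ≤ T) (_ : ∀ t ∈ Icc c d, HH U N t ≤ ν ^ 2),
    |HH U N d - HH U N c| ≤ D * ν ^ (j + 3) * (d - c) := by
  set Dm : ℕ → ℝ := fun m => 3 * (j + 1) + 1 + 4 ^ ((RL (j + 1) (m - 1)).flatMap incL).length with hDm
  have hDm0 : ∀ m, 0 < Dm m := fun m => by simp only [hDm]; positivity
  refine ⟨∑ m ∈ Finset.range (N + 1), Dm m, Finset.sum_pos (fun m _ => hDm0 m) (by simp), ?_⟩
  intro T U hU c d ν hν hcd hc0 hdT hH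
  have hm : ∀ m ∈ Finset.range (N + 1), |yy U m d - yy U m c| ≤ Dm m * ν ^ (j + 3) * (d - c) := by
    intro m hm
    rw [Finset.mem_range] at hm
    rcases m with _ | i
    · have := mass_const hU hcd hc0 hdT (X := ν ^ 2)
        (fun t ht => (HH_mono U (by omega) t).trans (hH t ht))
      rw [this, sub_self, abs_zero]
      have := hDm0 0
      have : 0 ≤ d - c := by linarith
      positivity
    · have hZ : ∀ t ∈ Icc c d, L2b (SP U ((RL (j + 1) i).flatMap incL) t)
          (4 ^ ((RL (j + 1) i).flatMap incL).length * (ν ^ 2) ^ (j + 2)) := by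
        intro t ht
        refine SP_L2 U _ (by positivity) (fun l hl => ?_)
        obtain ⟨g1, g2, g3⟩ := GoodL_inc (RL_good (j + 1) i) l hl
        refine (monoA U hN g1 (by omega) (fun x hx => (g3 x hx).trans (by omega)) t).mono ?_
        exact pow_le_pow_left₀ (HH_nonneg _ _ _) (hH t ht) _
      have := dq_energy hU i hcd hc0 hdT (β := (j + 1) * ν ^ (j + 1)) (Y := ν ^ 2)
        (κ := (ν ^ 2) ^ (j + 1)) (l := ν ^ (j + 1)) (by positivity) (by positivity)
        (fun t ht => VV_L2b_le U (by omega) (hH t ht))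
        (fun t ht x => V0pow_sq_le U (by omega) (hH t ht) _ x)
        (fun t ht x => powder_le U j hN hν (hH t ht) x) hZ
      refine this.trans (le_of_eq ?_)
      congr 1
      simp only [hDm, Nat.add_sub_cancel]
      field_simp
      ring
  unfold HH
  rw [← Finset.sum_sub_distrib]
  refine (Finset.abs_sum_le_sum_abs _ _).trans ((Finset.sum_le_sum hm).trans ?_)
  rw [← Finset.sum_mul, ← Finset.sum_mul]

lemma seg_mem {a t T θ : ℝ} (ha : a ∈ Icc 0 T) (ht : t ∈ Icc 0 T) (hθ : θ ∈ Icc (0:ℝ) 1) :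
    a + θ * (t - a) ∈ Icc 0 T := by
  obtain ⟨h1, h2⟩ := hθ
  constructor
  · nlinarith [ha.1, ht.1]
  · nlinarith [ha.2, ht.2]

lemma seg_lip {T : ℝ} (f : ℝ → ℝ) (Q : ℝ → Prop) {B : ℝ}
    (hf : ∀ c d, c ≤ d → 0 ≤ c → d ≤ T → (∀ q ∈ Icc c d, Q q) → |f d - f c| ≤ B * (d - c))
    {a t : ℝ} (ha : a ∈ Icc 0 T) (ht : t ∈ Icc 0 T) {θ₁ θ₂ : ℝ} (h1 : 0 ≤ θ₁) (h12 : θ₁ ≤ θ₂)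
    (h2 : θ₂ ≤ 1) (hQ : ∀ θ ∈ Icc θ₁ θ₂, Q (a + θ * (t - a))) :
    |f (a + θ₂ * (t - a)) - f (a + θ₁ * (t - a))| ≤ B * (|t - a| * (θ₂ - θ₁)) := by
  have m1 := seg_mem ha ht ⟨h1, h12.trans h2⟩
  have m2 := seg_mem ha ht ⟨h1.trans h12, h2⟩
  rcases lt_trichotomy a t with h | h | h
  · have h' : 0 < t - a := by linarith
    refine (hf _ _ (by nlinarith) m1.1 m2.2 (fun q hq => ?_)).trans (le_of_eq ?_)
    · have e : q = a + ((q - a) / (t - a)) * (t - a) := by field_simp; ring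
      rw [e]
      apply hQ
      rw [mem_Icc, le_div_iff₀ h', div_le_iff₀ h']
      constructor <;> linarith [hq.1, hq.2]
    · rw [abs_of_pos h']; ring
  · subst h; simp
  · have h' : 0 < a - t := by linarith
    rw [abs_sub_comm]
    refine (hf _ _ (by nlinarith) m2.1 m1.2 (fun q hq => ?_)).trans (le_of_eq ?_)
    · have e : q = a + ((a - q) / (a - t)) * (t - a) := by field_simp; ring
      rw [e]
      apply hQ
      rw [mem_Icc, le_div_iff₀ h', div_le_iff₀ h']
      constructor <;> linarith [hq.1, hq.2]
    · rw [abs_of_neg (by linarith)]; ring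

lemma seg_surj {a t q : ℝ} (hq : q ∈ uIcc a t) : ∃ θ ∈ Icc (0:ℝ) 1, q = a + θ * (t - a) := by
  rw [← segment_eq_uIcc, segment_eq_image'] at hq
  obtain ⟨θ, hθ, rfl⟩ := hq
  exact ⟨θ, hθ, by simp⟩

lemma seg_uIcc {a t θ : ℝ} (hθ : θ ∈ Icc (0:ℝ) 1) : a + θ * (t - a) ∈ uIcc a t := by
  rw [← segment_eq_uIcc, segment_eq_image']
  exact ⟨θ, hθ, by simp⟩

lemma loc_bound (j N : ℕ) (hN : 2 ≤ N) : ∃ D : ℝ, 0 < D ∧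
    ∀ {T : ℝ} {U : ℝ → SchwartzMap ℝ ℝ} (_ : Sol (j + 1) T U) {a t n : ℝ} (_ : 0 < n)
    (_ : a ∈ Icc 0 T) (_ : t ∈ Icc 0 T) (_ : ∃ M, ∀ r ∈ uIcc a t, HH U N r ≤ M)
    (_ : HH U N a ≤ n ^ 2) (_ : D * |t - a| * n ^ (j + 1) ≤ 1),
    ∀ r ∈ uIcc a t, HH U N r ≤ 4 * n ^ 2 := by
  obtain ⟨D, hD, hlip⟩ := HH_lip j N hN
  refine ⟨D * 2 ^ (j + 3), by positivity, ?_⟩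
  intro T U hU a t n hn ha ht hM hHa hsm r hr
  obtain ⟨M, hM⟩ := hM
  obtain ⟨θ, hθ, rfl⟩ := seg_surj hr
  refine first_exit (fun θ => HH U N (a + θ * (t - a))) (fun ν => D * ν ^ (j + 3) * |t - a|) hn
    ⟨M, fun θ hθ => hM _ (seg_uIcc hθ)⟩ ?_ ?_ (by simpa using hHa) θ hθ
  · intro ν hν c d hc hcd hd hH
    have := seg_lip (T := T) (HH U N) (fun q => HH U N q ≤ ν ^ 2) (B := D * ν ^ (j + 3))
      (fun c d h1 h2 h3 h4 => hlip hU hν h1 h2 h3 h4) ha ht hc hcd hd hH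
    rw [mul_assoc (D * ν ^ (j + 3))]
    exact this
  · calc D * (2 * n) ^ (j + 3) * |t - a| = (D * 2 ^ (j + 3) * |t - a| * n ^ (j + 1)) * n ^ 2 := by ring
      _ ≤ 1 * n ^ 2 := mul_le_mul_of_nonneg_right hsm (sq_nonneg _)
      _ = n ^ 2 := one_mul _

set_option maxHeartbeats 1000000 in
lemma gap_bound {j : ℕ} {T : ℝ} {U : ℝ → SchwartzMap ℝ ℝ} (hU : Sol (j + 1) T U)
    (hK : (∃ K, ∀ t ∈ Icc 0 T, ∀ x, |VV U 0 t x| ≤ K) ∨ j = 0) {N : ℕ} (hN : 3 ≤ N) {a t : ℝ}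
    (ha : a ∈ Icc 0 T) (ht : t ∈ Icc 0 T)
    (hb : ∀ c ∈ Ico (0:ℝ) 1, ∃ M, ∀ θ ∈ Icc 0 c, HH U N (t + θ * (a - t)) ≤ M) :
    ∃ M, ∀ θ ∈ Ico (0:ℝ) 1, HH U N (t + θ * (a - t)) ≤ M := by
  have hmem : ∀ θ ∈ Ico (0:ℝ) 1, t + θ * (a - t) ∈ Icc 0 T := fun θ hθ =>
    seg_mem ht ha ⟨hθ.1, hθ.2.le⟩
  -- mass and energy
  have hmass : ∀ θ ∈ Ico (0:ℝ) 1, yy U 0 (t + θ * (a - t)) = yy U 0 t := by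
    intro θ hθ
    obtain ⟨M, hM⟩ := hb θ hθ
    have := seg_lip (T := T) (yy U 0) (fun q => HH U N q ≤ M) (B := 0)
      (fun c d h1 h2 h3 h4 => by
        rw [mass_const hU h1 h2 h3 (X := M) (fun t ht => (HH_mono U (by omega) t).trans (h4 t ht))]
        simp) ht ha le_rfl hθ.1 hθ.2.le hM
    simp only [zero_mul, add_zero, abs_nonpos_iff, sub_eq_zero] at this
    exact this
  have henergy : ∀ θ ∈ Ico (0:ℝ) 1, E1 U (j + 1) (t + θ * (a - t)) = E1 U (j + 1) t := by
    intro θ hθ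
    obtain ⟨M, hM⟩ := hb θ hθ
    have := seg_lip (T := T) (E1 U (j + 1)) (fun q => HH U N q ≤ M) (B := 0)
      (fun c d h1 h2 h3 h4 => by
        rw [energy_const hU h1 h2 h3 (X := M) (fun t ht => (HH_mono U (by omega) t).trans (h4 t ht))]
        simp) ht ha le_rfl hθ.1 hθ.2.le hM
    simp only [zero_mul, add_zero, abs_nonpos_iff, sub_eq_zero] at this
    exact this
  -- relation between the energy and the first derivative
  set m := yy U 0 t with hm
  have hm0 : 0 ≤ m := yy_nonneg U 0 t
  have hrel : ∀ s X, L1b (fun x => (-(2 / (((j + 1 : ℕ) + 1) * ((j + 1 : ℕ) + 2)))) *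
      ((VV U 0 s x ^ (j + 1) * VV U 0 s x) * VV U 0 s x)) X → yy U 1 s ≤ |E1 U (j + 1) s| + X := by
    intro s X h
    have e : E1 U (j + 1) s = yy U 1 s + ∫ x, (-(2 / (((j + 1 : ℕ) + 1) * ((j + 1 : ℕ) + 2)))) *
      ((VV U 0 s x ^ (j + 1) * VV U 0 s x) * VV U 0 s x) := by
      unfold E1
      rw [integral_add ((VV_L2b U 1 s).integrable_mul (VV_L2b U 1 s)) h.int]
      congr 1
      unfold yy; congr 1; ext x; ring
    have h1 := h.abs_integral_le
    have h2 := le_abs_self (E1 U (j + 1) s)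
    have h3 := (abs_le.1 h1).1
    linarith
  have hcoef : |(-(2 / ((((j + 1 : ℕ):ℝ) + 1) * ((j + 1 : ℕ) + 2))))| ≤ 1 := by
    rw [abs_neg, abs_of_pos (by positivity), div_le_one (by positivity)]
    push_cast
    nlinarith [Nat.cast_nonneg (α := ℝ) j]
  have hH1 : ∃ b, ∀ θ ∈ Ico (0:ℝ) 1, yy U 1 (t + θ * (a - t)) ≤ b := by
    rcases hK with ⟨K, hK⟩ | hj
    · refine ⟨|E1 U (j + 1) t| + 1 * ((1 * ((K ^ (j + 1)) ^ 2 * m) + m / 1) / 2), fun θ hθ => ?_⟩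
      rw [← henergy θ hθ]
      apply hrel
      have l0 : L2b (VV U 0 (t + θ * (a - t))) m := (VV_L2b U 0 _).mono (hmass θ hθ).le
      have h1 := (((L2b.bmul ((VV_cont U 0 _).pow (j + 1)) (β := (K ^ (j + 1)) ^ 2) (fun x => by
        have := hK _ (hmem θ hθ) x
        rw [Pi.pow_apply, ← sq_abs, abs_pow]
        gcongr) l0).l1 l0 one_pos).cmul (-(2 / ((((j + 1 : ℕ):ℝ) + 1) * ((j + 1 : ℕ) + 2)))))
      refine h1.mono (mul_le_mul_of_nonneg_right hcoef ?_)
      positivity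
    · subst hj
      refine ⟨2 * (|E1 U (0 + 1) t| + ((m + 1) * m * m + m) / 2), fun θ hθ => ?_⟩
      have l0 : L2b (VV U 0 (t + θ * (a - t))) m := (VV_L2b U 0 _).mono (hmass θ hθ).le
      have l1 := VV_L2b U 1 (t + θ * (a - t))
      set s := t + θ * (a - t) with hs
      have hsup : ∀ x, (VV U 0 s x ^ (0 + 1)) ^ 2 ≤ (m + 1) * m + yy U 1 s / (m + 1) := fun x => by
        have := sup_sq_le (fun x => VV_hasDerivAt U 0 s x) l0 l1 (by linarith : 0 < m + 1) x
        simpa using this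
      have h1 := (((L2b.bmul ((VV_cont U 0 _).pow (0 + 1)) hsup l0).l1 l0 one_pos).cmul
        (-(2 / ((((0 + 1 : ℕ):ℝ) + 1) * ((0 + 1 : ℕ) + 2)))))
      have hy0 := yy_nonneg U 1 s
      have h2 := hrel s _ (h1.mono (mul_le_mul_of_nonneg_right hcoef (by positivity)))
      rw [henergy θ hθ] at h2
      have h3 : yy U 1 s / (m + 1) * m ≤ yy U 1 s := by
        rw [div_mul_eq_mul_div, div_le_iff₀ (by linarith)]; nlinarith
      have h4 : ((m + 1) * m + yy U 1 s / (m + 1)) * m = (m + 1) * m * m + yy U 1 s / (m + 1) * m := by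
        ring
      rw [h4] at h2
      linarith
  obtain ⟨b1, hb1⟩ := hH1
  set a1 := m + b1 with ha1
  have hH1' : ∀ θ ∈ Ico (0:ℝ) 1, HH U 1 (t + θ * (a - t)) ≤ a1 := by
    intro θ hθ
    have : HH U 1 (t + θ * (a - t)) = yy U 0 (t + θ * (a - t)) + yy U 1 (t + θ * (a - t)) := by
      simp [HH, Finset.sum_range_succ]
    rw [this, hmass θ hθ]
    linarith [hb1 θ hθ]
  have ha10 : 0 ≤ a1 := (HH_nonneg U 1 _).trans (hH1' 0 ⟨le_rfl, one_pos⟩)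
  -- second derivative
  obtain ⟨A0, hA0, hA⟩ := mod_energy j ha10
  set A1 := 5 / 3 * ((1 * (a1 ^ (j + 1) * a1) + a1 / 1) / 2) with hA1
  have hA10 : 0 ≤ A1 := by positivity
  have hH2 : ∃ b, ∀ θ ∈ Ico (0:ℝ) 1, yy U 2 (t + θ * (a - t)) ≤ b := by
    refine gap_gronwall (fun θ => yy U 2 (t + θ * (a - t))) (fun θ => E2 U (j + 1) (t + θ * (a - t)))
      (A := 2 * A0 * |a - t| + A1) (fun _ => yy_nonneg _ _ _) ?_ ?_ ?_
    · intro c hc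
      obtain ⟨M, hM⟩ := hb c hc
      exact ⟨M, fun r hr => (yy_le_HH U (by omega) _).trans (hM r hr)⟩
    · intro c d hc hcd hd Y hY0 hY
      obtain ⟨M, hM⟩ := hb d ⟨hc.trans hcd, hd⟩
      have := seg_lip (T := T) (E2 U (j + 1)) (fun q => HH U 3 q ≤ M ∧ HH U 1 q ≤ a1 ∧ yy U 2 q ≤ Y + 1)
        (B := A0 * (1 + (Y + 1)))
        (fun c d h1 h2 h3 h4 => hA hU h1 h2 h3 (fun q hq => (h4 q hq).1) (fun q hq => (h4 q hq).2.1)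
          (fun q hq => (h4 q hq).2.2) (by linarith)) ht ha hc hcd hd.le (fun θ hθ =>
          ⟨(HH_mono U hN _).trans (hM θ ⟨hc.trans hθ.1, hθ.2⟩),
            hH1' θ ⟨hc.trans hθ.1, hθ.2.trans_lt hd⟩, by linarith [hY θ hθ]⟩)
      refine this.trans ?_
      have p1 : 0 ≤ A0 * |a - t| * (d - c) := by
        have : 0 ≤ d - c := by linarith
        positivity
      have p2 : 0 ≤ A1 * (1 + Y) * (d - c) := by
        have : 0 ≤ d - c := by linarith
        positivity
      nlinarith
    · intro θ hθ
      have := E2_close U (j + 1) (hH1' θ hθ)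
      refine this.trans ?_
      have : 0 ≤ 2 * A0 * |a - t| := by positivity
      rw [← hA1]; linarith
  obtain ⟨b2, hb2⟩ := hH2
  have hall : ∀ i, i + 2 ≤ N → ∃ b, ∀ θ ∈ Ico (0:ℝ) 1, HH U (i + 2) (t + θ * (a - t)) ≤ b := by
    intro i
    induction i with
    | zero =>
      intro _
      refine ⟨a1 + b2, fun θ hθ => ?_⟩
      rw [HH_succ]
      exact add_le_add (hH1' θ hθ) (hb2 θ hθ)
    | succ i ih =>
      intro hi
      obtain ⟨b, hbb⟩ := ih (by omega)
      set b' := |b| + 1 with hb'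
      have hb'1 : 1 ≤ b' := by rw [hb']; linarith [abs_nonneg b]
      have hb'0 : 0 < b' := by linarith
      have hbb' : ∀ θ ∈ Ico (0:ℝ) 1, HH U (i + 2) (t + θ * (a - t)) ≤ b' := fun θ hθ =>
        (hbb θ hθ).trans (by rw [hb']; linarith [le_abs_self b])
      set Lc : ℝ := 4 ^ ((RL (j + 1) (i + 2)).flatMap incL).length with hLc
      have hLc0 : 0 < Lc := by rw [hLc]; positivity
      set A := 3 * ((j + 1) * b' ^ (j + 1)) + 1 + Lc * (b' ^ (j + 1) * b') with hAdef
      have hA0 : 0 ≤ A := by positivity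
      have hy : ∃ b, ∀ θ ∈ Ico (0:ℝ) 1, yy U (i + 3) (t + θ * (a - t)) ≤ b := by
        refine gap_gronwall (fun θ => yy U (i + 3) (t + θ * (a - t)))
          (fun θ => yy U (i + 3) (t + θ * (a - t)))
          (A := A * |a - t|) (fun _ => yy_nonneg _ _ _) ?_ ?_ ?_
        · intro c hc
          obtain ⟨M, hM⟩ := hb c hc
          exact ⟨M, fun r hr => (yy_le_HH U (by omega) _).trans (hM r hr)⟩
        · intro c d hc hcd hd Y hY0 hY
          have := seg_lip (T := T) (yy U (i + 3)) (fun q => HH U (i + 2) q ≤ b' ∧ yy U (i + 3) q ≤ Y)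
            (B := A * (1 + Y)) (fun c d h1 h2 h3 h4 => by
              have hq1 : ∀ q ∈ Icc c d, HH U (i + 2) q ≤ b' ^ 2 := fun q hq =>
                (h4 q hq).1.trans (by nlinarith)
              have hZ : ∀ q ∈ Icc c d, L2b (SP U ((RL (j + 1) (i + 2)).flatMap incL) q)
                  (Lc * (b' ^ (j + 1) * (b' + Y))) := by
                intro q hq
                refine SP_L2 U _ (by positivity) (fun l hl => ?_)
                refine (monoB U (by omega) (GoodL_inc (RL_good (j + 1) (i + 2)) l hl) q).mono ?_
                rw [HH_succ]
                simp only [Nat.add_sub_cancel]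
                have e := h4 q hq
                exact mul_le_mul (pow_le_pow_left₀ (HH_nonneg _ _ _) e.1 _)
                  (add_le_add e.1 e.2) (add_nonneg (HH_nonneg _ _ _) (yy_nonneg _ _ _)) (by positivity)
              refine (dq_energy hU (i + 2) h1 h2 h3 (β := (j + 1) * b' ^ (j + 1)) (Y := Y) (l := 1)
                (κ := (b' ^ 2) ^ (j + 1)) (by positivity) one_pos
                (fun q hq => (VV_L2b U (i + 3) q).mono (h4 q hq).2)
                (fun q hq x => V0pow_sq_le U (by omega) (hq1 q hq) _ x)
                (fun q hq x => powder_le U j (by omega) hb'0 (hq1 q hq) x) hZ).trans ?_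
              refine mul_le_mul_of_nonneg_right ?_ (by linarith)
              rw [hAdef, div_one, one_mul]
              have p1 : Lc * (b' ^ (j + 1) * (b' + Y)) ≤ Lc * (b' ^ (j + 1) * b') * (1 + Y) := by
                have : b' + Y ≤ b' * (1 + Y) := by nlinarith
                calc Lc * (b' ^ (j + 1) * (b' + Y)) ≤ Lc * (b' ^ (j + 1) * (b' * (1 + Y))) := by
                      gcongr
                  _ = _ := by ring
              have p2 : 0 ≤ (j + 1) * b' ^ (j + 1) := by positivity
              nlinarith) ht ha hc hcd hd.le (fun θ hθ =>
              ⟨hbb' θ ⟨hc.trans hθ.1, hθ.2.trans_lt hd⟩, hY θ hθ⟩)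
          refine this.trans (le_of_eq ?_)
          ring
        · intro θ _
          rw [sub_self, abs_zero]
          positivity
      obtain ⟨b3, hb3⟩ := hy
      refine ⟨b' + b3, fun θ hθ => ?_⟩
      have e1 := HH_succ U (i + 2) (t + θ * (a - t))
      have e2 := hbb' θ hθ
      have e3 := hb3 θ hθ
      have e4 : i + 1 + 2 = i + 2 + 1 := by omega
      rw [e4, e1]
      exact add_le_add e2 e3
  obtain ⟨b, hb⟩ := hall (N - 2) (by omega)
  rw [Nat.sub_add_cancel (by omega)] at hb
  exact ⟨b, hb⟩

theorem regularity {j : ℕ} {T : ℝ} {U : ℝ → SchwartzMap ℝ ℝ} (hU : Sol (j + 1) T U)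
    (hK : (∃ K, ∀ t ∈ Icc 0 T, ∀ x, |VV U 0 t x| ≤ K) ∨ j = 0) (N : ℕ) :
    ∃ M, ∀ t ∈ Icc 0 T, HH U N t ≤ M := by
  suffices h : ∀ N, 3 ≤ N → ∃ M, ∀ t ∈ Icc 0 T, HH U N t ≤ M by
    obtain ⟨M, hM⟩ := h (N + 3) (by omega)
    exact ⟨M, fun t ht => (HH_mono U (by omega) t).trans (hM t ht)⟩
  clear N
  intro N hN
  obtain ⟨D, hD, hloc⟩ := loc_bound j N (by omega)
  refine baire_gap (HH U N) (fun n => HH_closed hU.1 N T n) (fun n => ?_)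
  set n' : ℝ := n + 1 with hn'
  have hn'0 : 0 < n' := by positivity
  have hn'1 : (n:ℝ) ≤ n' ^ 2 := by
    rw [hn']; nlinarith [Nat.cast_nonneg (α := ℝ) n]
  refine ⟨1 / (D * n' ^ (j + 1)), by positivity, 4 * n' ^ 2, ?_⟩
  intro a ha t ht hρ hτ hgap
  rcases eq_or_ne t a with rfl | hne
  · refine hρ.trans (hn'1.trans ?_); nlinarith [sq_nonneg n']
  refine hloc hU hn'0 ha ht ?_ (hρ.trans hn'1) ?_ t right_mem_uIcc
  · obtain ⟨M, hM⟩ := gap_bound hU hK hN ha ht (by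
      intro c hc
      obtain ⟨M, hM⟩ := hgap (t + c * (a - t)) (by
          rw [uIcc_comm]; exact seg_uIcc ⟨hc.1, hc.2.le⟩) (by
          intro h
          have h1 : (1 - c) * (t - a) = 0 := by linear_combination h
          rcases mul_eq_zero.1 h1 with h2 | h2
          · linarith [hc.2]
          · exact hne (sub_eq_zero.1 h2))
      refine ⟨M, fun θ hθ => hM _ ?_⟩
      rcases hc.1.eq_or_lt with h0 | h0
      · have : θ = 0 := le_antisymm (h0 ▸ hθ.2) hθ.1
        rw [this]; simp
      · have e : t + θ * (a - t) = t + (θ / c) * (t + c * (a - t) - t) := by field_simp; ring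
        rw [e, uIcc_comm]
        exact seg_uIcc ⟨div_nonneg hθ.1 h0.le, (div_le_one h0).2 hθ.2⟩)
    refine ⟨max M n, fun r hr => ?_⟩
    rw [uIcc_comm] at hr
    obtain ⟨θ, hθ, rfl⟩ := seg_surj hr
    rcases hθ.2.eq_or_lt with h1 | h1
    · rw [h1]
      have : t + 1 * (a - t) = a := by ring
      rw [this]; exact hρ.trans (le_max_right _ _)
    · exact (hM θ ⟨hθ.1, h1⟩).trans (le_max_left _ _)
  · calc D * |t - a| * n' ^ (j + 1) = |t - a| * (D * n' ^ (j + 1)) := by ring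
      _ ≤ 1 / (D * n' ^ (j + 1)) * (D * n' ^ (j + 1)) :=
          mul_le_mul_of_nonneg_right hτ (by positivity)
      _ = 1 := by field_simp

end PartA8

section PartA9
open Filter Topology Set

lemma NL_L2 (U : ℝ → SchwartzMap ℝ ℝ) (k : ℕ) {m N : ℕ} (hN : 2 ≤ N) (hm : m + 1 ≤ N) {t X : ℝ}
    (hX : HH U N t ≤ X) : L2b (NL U k m t) ((2 + 2 * 4 ^ (RL k m).length) * X ^ (k + 1)) := by
  have hX0 : 0 ≤ X := (HH_nonneg U N t).trans hX
  have h1 : L2b (fun x => VV U 0 t x ^ k * VV U (m + 1) t x) (X ^ k * X) :=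
    L2b.bmul ((VV_cont U 0 t).pow k) (V0pow_sq_le U (by omega) hX k) (VV_L2b_le U hm hX)
  have h2 : L2b (SP U (RL k m) t) (4 ^ (RL k m).length * X ^ (k + 1)) := by
    refine SP_L2 U _ (by positivity) (fun l hl => ?_)
    obtain ⟨g1, g2, g3⟩ := RL_good k m l hl
    refine (monoA U hN g1 (by omega) (fun i hi => (g3 i hi).trans (by omega)) t).mono ?_
    exact pow_le_pow_left₀ (HH_nonneg _ _ _) hX _
  refine (h1.add h2).mono (le_of_eq ?_)
  ring

lemma absorb {T A : ℝ} (f : ℝ → ℝ) (hT : 0 ≤ T) (hb : ∃ M, ∀ t ∈ Icc 0 T, f t ≤ M)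
    (h : ∀ Y, (∀ t ∈ Icc 0 T, f t ≤ Y) → ∀ t ∈ Icc 0 T, f t ≤ A + Y / 2) :
    ∀ t ∈ Icc 0 T, f t ≤ 2 * A := by
  obtain ⟨M, hM⟩ := hb
  have hbd : BddAbove (f '' Icc 0 T) := ⟨M, by rintro _ ⟨t, ht, rfl⟩; exact hM t ht⟩
  have hY : ∀ t ∈ Icc 0 T, f t ≤ sSup (f '' Icc 0 T) := fun t ht => le_csSup hbd ⟨t, ht, rfl⟩
  have h1 : sSup (f '' Icc 0 T) ≤ A + sSup (f '' Icc 0 T) / 2 := by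
    refine csSup_le ⟨f 0, 0, ⟨le_rfl, hT⟩, rfl⟩ ?_
    rintro _ ⟨t, ht, rfl⟩
    exact h _ hY t ht
  intro t ht
  linarith [hY t ht]

/-- squared `L²` norm of the differences of derivatives -/
noncomputable def zz (u U : ℝ → SchwartzMap ℝ ℝ) (m : ℕ) (t : ℝ) : ℝ :=
  ∫ x, (VV u m t x - VV U m t x) ^ 2

lemma diff_L2b (u U : ℝ → SchwartzMap ℝ ℝ) (m : ℕ) (t : ℝ) :
    L2b (fun x => VV u m t x - VV U m t x) (zz u U m t) := by
  have h := (VV_L2b u m t).sub (VV_L2b U m t)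
  exact ⟨h.cont, h.int, le_rfl⟩

lemma diff_bound {k l : ℕ} {T : ℝ} {u U : ℝ → SchwartzMap ℝ ℝ} (hT : 0 < T) (hu : Sol l T u)
    (hU : Sol k T U) {m N : ℕ} (hN : 2 ≤ N) (hm : m + 1 ≤ N) {X Z : ℝ}
    (hX : ∀ t ∈ Icc 0 T, HH u N t ≤ X) (hZ : ∀ t ∈ Icc 0 T, HH U N t ≤ Z) :
    ∀ t ∈ Icc 0 T, zz u U m t ≤ 2 * (zz u U m 0 + 2 * T ^ 2 *
      (2 * ((2 + 2 * 4 ^ (RL l m).length) * X ^ (l + 1))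
        + 2 * ((2 + 2 * 4 ^ (RL k m).length) * Z ^ (k + 1)))) := by
  set G := (2 * ((2 + 2 * 4 ^ (RL l m).length) * X ^ (l + 1))
        + 2 * ((2 + 2 * 4 ^ (RL k m).length) * Z ^ (k + 1))) with hG
  have hdiff : ∀ i ≤ N, ∀ t ∈ Icc 0 T, L2b (fun x => VV u i t x - VV U i t x) (2 * X + 2 * Z) :=
    fun i hi t ht => (VV_L2b_le u hi (hX t ht)).sub (VV_L2b_le U hi (hZ t ht))
  refine absorb (zz u U m) hT.le ⟨2 * X + 2 * Z, fun t ht => (hdiff m (by omega) t ht).le⟩ ?_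
  intro Y hY t ht
  have hG2 : ∀ τ ∈ Icc 0 T, L2b (fun x => NL u l m τ x - NL U k m τ x) G := fun τ hτ =>
    (NL_L2 u l hN hm (hX τ hτ)).sub (NL_L2 U k hN hm (hZ τ hτ))
  have hsub : ∀ τ ∈ Icc 0 t, τ ∈ Icc 0 T := fun τ hτ => ⟨hτ.1, hτ.2.trans ht.2⟩
  have hY0 : 0 ≤ Y := (diff_L2b u U m 0).nonneg.trans (hY 0 ⟨le_rfl, hT.le⟩)
  have hG0 : 0 ≤ G := (hG2 t ht).nonneg
  have hl : 0 < 1 / (2 * T) := by positivity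
  have hg : ∀ τ ∈ Icc 0 t, L1b (fun x => (-2) * ((VV u m τ x - VV U m τ x) *
      (NL u l m τ x - NL U k m τ x))) (|(-2:ℝ)| * ((1 / (2 * T) * Y + G / (1 / (2 * T))) / 2)) :=
    fun τ hτ => ((((diff_L2b u U m τ).mono (hY τ (hsub τ hτ))).l1 (hG2 τ (hsub τ hτ)) hl).cmul (-2))
  have hq1 : ∃ K, ∀ τ ∈ Icc 0 t, L1b (fun x => 3 * ((VV u (m + 1) τ x - VV U (m + 1) τ x) *
      (VV u (m + 1) τ x - VV U (m + 1) τ x))) K :=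
    ⟨_, fun τ hτ => (((hdiff (m + 1) hm τ (hsub τ hτ)).l1 (hdiff (m + 1) hm τ (hsub τ hτ))
      one_pos).cmul 3)⟩
  have hq2 : ∃ K, ∀ τ ∈ Icc 0 t, L1b (fun x => (-2) * ((VV u m τ x - VV U m τ x) *
      (VV u (m + 1) τ x - VV U (m + 1) τ x))) K :=
    ⟨_, fun τ hτ => (((hdiff m (by omega) τ (hsub τ hτ)).l1 (hdiff (m + 1) hm τ (hsub τ hτ))
      one_pos).cmul (-2))⟩
  obtain ⟨K1, hq1⟩ := hq1
  obtain ⟨K2, hq2⟩ := hq2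
  have hd : ∀ i τ x, HasDerivAt (fun x => VV u i τ x - VV U i τ x)
      (VV u (i + 1) τ x - VV U (i + 1) τ x) x := fun i τ x =>
    (VV_hasDerivAt u i τ x).sub (VV_hasDerivAt U i τ x)
  have hc : ∀ i τ, Continuous (fun x => VV u i τ x - VV U i τ x) := fun i τ =>
    (VV_cont u i τ).sub (VV_cont U i τ)
  have key := flux_lemma' ht.1 (fun τ x => (VV u m τ x - VV U m τ x) ^ 2)
    (fun τ x => 2 * (VV u m τ x - VV U m τ x) * (WW u m τ x - WW U m τ x))
    (fun τ x => (-2) * ((VV u m τ x - VV U m τ x) * (NL u l m τ x - NL U k m τ x)))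
    (fun τ x => 3 * ((VV u (m + 1) τ x - VV U (m + 1) τ x) * (VV u (m + 1) τ x - VV U (m + 1) τ x)))
    (fun τ x => (-2) * ((VV u m τ x - VV U m τ x) * (VV u (m + 1) τ x - VV U (m + 1) τ x)))
    (fun τ x => (-2) * ((VV u (m + 1) τ x - VV U (m + 1) τ x) * (VV u (m + 1) τ x - VV U (m + 1) τ x)
      + (VV u m τ x - VV U m τ x) * (VV u (m + 2) τ x - VV U (m + 2) τ x)))
    (((continuous_const.mul ((VV_jcont hu.1 m).sub (VV_jcont hU.1 m)))).mul
      ((WW_jcont hu.1 m).sub (WW_jcont hU.1 m)))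
    (fun τ => (hc m τ).pow 2)
    (fun τ x => by
      have := ((WW_hasDerivAt_t hu.1 m τ x).sub (WW_hasDerivAt_t hU.1 m τ x)).pow 2
      refine HasDerivAt.congr_deriv this ?_
      simp)
    (fun τ _ x => ((hd m τ x).mul (hd (m + 1) τ x)).const_mul (-2))
    (fun τ hτ x => by
      have h1 := (((hd (m + 1) τ x).mul (hd (m + 1) τ x)).const_mul 3).add
        ((((hd (m + 1) τ x).mul (hd (m + 1) τ x)).add ((hd m τ x).mul (hd (m + 2) τ x))).const_mul (-2))
      refine HasDerivAt.congr_deriv h1 ?_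
      rw [WW_eq hu m (hsub τ hτ) x, WW_eq hU m (hsub τ hτ) x]
      ring)
    (fun τ _ => continuous_const.mul (((hc (m + 1) τ).mul (hc (m + 1) τ)).add
      ((hc m τ).mul (hc (m + 2) τ))))
    hg hq1 hq2 (fun τ => (diff_L2b u U m τ).int)
  have key2 : |zz u U m t - zz u U m 0| ≤ (Y / (2 * T) + G * (2 * T)) * (t - 0) := by
    refine key.trans (le_of_eq ?_)
    rw [abs_neg, abs_two]
    field_simp
  have h3 : (Y / (2 * T) + G * (2 * T)) * (t - 0) ≤ (Y / (2 * T) + G * (2 * T)) * T := by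
    apply mul_le_mul_of_nonneg_left _ (by positivity)
    linarith [ht.2]
  have h4 : (Y / (2 * T) + G * (2 * T)) * T = Y / 2 + 2 * T ^ 2 * G := by field_simp
  have h5 := (abs_le.1 key2).2
  linarith

lemma sol_of {k : ℕ} {T : ℝ} {U : ℝ → SchwartzMap ℝ ℝ}
    (h1 : ContDiff ℝ (⊤ : ℕ∞) (fun p : ℝ × ℝ => U p.1 p.2))
    (h2 : ∀ t ∈ Set.Icc (0 : ℝ) T, ∀ x : ℝ, deriv (fun τ : ℝ => U τ x) t + iteratedDeriv 3 (⇑(U t)) x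
      + (U t x) ^ k * deriv (⇑(U t)) x = 0) : Sol k T U := by
  refine ⟨h1, fun t ht x => ?_⟩
  have h := h2 t ht x
  have e : deriv (fun τ : ℝ => U τ x) t = WW U 0 t x := by
    have := (WW_hasDerivAt_t (U := U) h1 0 t x).deriv
    simpa only [VV_zero] using this
  rw [e] at h
  have e2 : deriv (⇑(U t)) x = VV U 1 t x := by rw [VV, iteratedDeriv_one]
  rw [e2, ← VV_zero U t x] at h
  have e3 : iteratedDeriv 3 (⇑(U t)) x = VV U 3 t x := rfl
  rw [e3] at h
  linarith

lemma iter_diff (u U : ℝ → SchwartzMap ℝ ℝ) (n : ℕ) (t x : ℝ) :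
    iteratedDeriv n (fun x => u t x - U t x) x = VV u n t x - VV U n t x := by
  have h : (fun x => u t x - U t x) = (⇑(u t) - ⇑(U t)) := rfl
  rw [h, iteratedDeriv_sub ((u t).smooth n).contDiffAt ((U t).smooth n).contDiffAt]
  rfl


lemma hNorm_eq (M : ℕ) (U : ℝ → SchwartzMap ℝ ℝ) (t : ℝ) : hNorm M (⇑(U t)) ^ 2 = HH U M t :=
  Real.sq_sqrt (HH_nonneg U M t)

lemma hNorm_diff (s : ℕ) (u U : ℝ → SchwartzMap ℝ ℝ) (t : ℝ) :
    hNorm s (fun x => u t x - U t x) = Real.sqrt (∑ n ∈ Finset.range (s + 1), zz u U n t) := by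
  simp only [hNorm, zz, iter_diff]

lemma zz_nonneg (u U : ℝ → SchwartzMap ℝ ℝ) (m : ℕ) (t : ℝ) : 0 ≤ zz u U m t :=
  (diff_L2b u U m t).nonneg

lemma zz_le (s : ℕ) (u U : ℝ → SchwartzMap ℝ ℝ) {m : ℕ} (hm : m ≤ s) (t : ℝ) :
    zz u U m t ≤ hNorm s (fun x => u t x - U t x) ^ 2 := by
  rw [hNorm_diff, Real.sq_sqrt (Finset.sum_nonneg fun _ _ => zz_nonneg _ _ _ _)]
  exact Finset.single_le_sum (f := fun n => zz u U n t) (fun _ _ => zz_nonneg _ _ _ _)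
    (Finset.mem_range.2 (by omega))

lemma abs_diff_le {s : ℕ} (hs : 1 ≤ s) (u U : ℝ → SchwartzMap ℝ ℝ) (t x : ℝ) :
    |u t x - U t x| ≤ hNorm s (fun x => u t x - U t x) := by
  have h0 : 0 ≤ hNorm s (fun x => u t x - U t x) := Real.sqrt_nonneg _
  refine abs_le_of_sq_le_sq ?_ h0
  have h1 := sup_sq_le (fun x => (VV_hasDerivAt u 0 t x).sub (VV_hasDerivAt U 0 t x))
    (diff_L2b u U 0 t) (diff_L2b u U 1 t) one_pos x
  have h2 : zz u U 0 t + zz u U 1 t ≤ hNorm s (fun x => u t x - U t x) ^ 2 := by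
    rw [hNorm_diff, Real.sq_sqrt (Finset.sum_nonneg fun _ _ => zz_nonneg _ _ _ _)]
    have : ∑ n ∈ Finset.range 2, zz u U n t ≤ ∑ n ∈ Finset.range (s + 1), zz u U n t :=
      Finset.sum_le_sum_of_subset_of_nonneg (Finset.range_mono (by omega))
        (fun _ _ _ => zz_nonneg _ _ _ _)
    simpa [Finset.sum_range_succ] using this
  simp only [Pi.sub_apply, VV_zero, one_mul, div_one] at h1
  linarith

lemma linf_le {s : ℕ} (hs : 1 ≤ s) (u U : ℝ → SchwartzMap ℝ ℝ) (t : ℝ) :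
    linfNorm (fun x => u t x - U t x) ≤ hNorm s (fun x => u t x - U t x) :=
  ciSup_le (fun x => abs_diff_le hs u U t x)

lemma abs_le_linf (u U : ℝ → SchwartzMap ℝ ℝ) (t x : ℝ) :
    |u t x - U t x| ≤ linfNorm (fun x => u t x - U t x) :=
  le_ciSup (f := fun x => |u t x - U t x|)
    ⟨_, by rintro _ ⟨x, rfl⟩; exact abs_diff_le (le_refl 1) u U t x⟩ x

/-- smallness of time with respect to the norm of the initial data -/
lemma init_bound {j N : ℕ} {D T n : ℝ} {U : ℝ → SchwartzMap ℝ ℝ} (hT : 0 < T) (hn0 : 0 ≤ n)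
    (hD : 0 < D)
    (hloc : ∀ {T : ℝ} {U : ℝ → SchwartzMap ℝ ℝ} (_ : Sol (j + 1) T U) {a t n : ℝ} (_ : 0 < n)
    (_ : a ∈ Icc 0 T) (_ : t ∈ Icc 0 T) (_ : ∃ M, ∀ r ∈ uIcc a t, HH U N r ≤ M)
    (_ : HH U N a ≤ n ^ 2) (_ : D * |t - a| * n ^ (j + 1) ≤ 1),
    ∀ r ∈ uIcc a t, HH U N r ≤ 4 * n ^ 2) (hU : Sol (j + 1) T U)
    (hM : ∃ M, ∀ t ∈ Icc 0 T, HH U N t ≤ M) (hn : n ^ 2 = HH U N 0)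
    (hTn : T ≤ (1 / D) * (n ^ (j + 1))⁻¹) : ∀ t ∈ Icc 0 T, HH U N t ≤ 4 * n ^ 2 := by
  have hnpos : 0 < n := by
    rcases hn0.eq_or_lt with h | h
    · rw [← h] at hTn
      simp at hTn
      linarith
    · exact h
  have h := hloc hU hnpos ⟨le_rfl, hT.le⟩ ⟨hT.le, le_rfl⟩ (by rwa [uIcc_of_le hT.le]) hn.ge (by
    have hp : 0 < n ^ (j + 1) := by positivity
    rw [sub_zero, abs_of_pos hT]
    calc D * T * n ^ (j + 1) = T * (D * n ^ (j + 1)) := by ring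
      _ ≤ (1 / D) * (n ^ (j + 1))⁻¹ * (D * n ^ (j + 1)) := by gcongr
      _ = 1 := by field_simp)
  rwa [uIcc_of_le hT.le] at h

end PartA9

/-- `H^s` and `L^∞` proximity between the KdV equation and the gKdV equation
with power nonlinearity `∂ₜU + ∂ₓ³U + Uᵏ∂ₓU = 0`:
`sup_{t∈[0,T]} ‖u(t) − U(t)‖_{H^s} ≤ C̃ₛ·max{ε², ε^{k+1}}` and consequently
`sup_{t∈[0,T]} ‖u(t) − U(t)‖_{L^∞} ≤ C̃ₛ·max{ε², ε^{k+1}}`. -/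
theorem kdv_gkdv_power_Hs_proximity (k : ℕ) (hk : 1 ≤ k) (s : ℕ) (hs : 1 ≤ s) :
    ∃ cs : ℝ, 0 < cs ∧
      ∀ c₀ C₀ C T : ℝ, 0 < c₀ → 0 < C₀ → 0 < C → 0 < T →
        ∃ Ct : ℝ, 0 < Ct ∧
          ∀ ε : ℝ, 0 < ε →
            ∀ u U : ℝ → SchwartzMap ℝ ℝ,
              IsSchwartzSolution (fun y => y) T u →
              IsSchwartzSolution (fun y => y ^ k) T U →
              u 0 ≠ 0 → U 0 ≠ 0 →
              T ≤ cs * min (hNorm (s + 1) (⇑(U 0)) ^ k)⁻¹ (hNorm (s + 1) (⇑(u 0)))⁻¹ →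
              hNorm (s + 1) (⇑(u 0)) ≤ c₀ * ε →
              hNorm (s + 1) (⇑(U 0)) ≤ C₀ * ε →
              hNorm s (fun x => u 0 x - U 0 x) ≤ C * max (ε ^ 2) (ε ^ (k + 1)) →
              (⨆ t : Set.Icc (0 : ℝ) T, hNorm s (fun x => u (t : ℝ) x - U (t : ℝ) x))
                  ≤ Ct * max (ε ^ 2) (ε ^ (k + 1)) ∧
                (⨆ t : Set.Icc (0 : ℝ) T, linfNorm (fun x => u (t : ℝ) x - U (t : ℝ) x))
                  ≤ Ct * max (ε ^ 2) (ε ^ (k + 1)) := by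
  obtain ⟨j, rfl⟩ : ∃ j, k = j + 1 := ⟨k - 1, by omega⟩
  obtain ⟨D1, hD1, hloc1⟩ := loc_bound 0 (s + 1) (by omega)
  obtain ⟨D2, hD2, hloc2⟩ := loc_bound j (s + 1) (by omega)
  refine ⟨min (1 / D1) (1 / D2), by positivity, ?_⟩
  intro c₀ C₀ C T hc₀ hC₀ hC hT
  set A : ℕ → ℝ := fun m => 2 * (C ^ 2 + 2 * T ^ 2 *
      (2 * ((2 + 2 * 4 ^ (RL (0 + 1) m).length) * (4 * c₀ ^ 2) ^ (0 + 1 + 1))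
        + 2 * ((2 + 2 * 4 ^ (RL (j + 1) m).length) * (4 * C₀ ^ 2) ^ (j + 1 + 1)))) with hA
  refine ⟨Real.sqrt (∑ m ∈ Finset.range (s + 1), A m) + 1, by positivity, ?_⟩
  intro ε hε u U hu hU _ _ hTs hu0 hU0 hw0
  set δ := max (ε ^ 2) (ε ^ (j + 1 + 1)) with hδ
  have hδ0 : 0 < δ := lt_max_of_lt_left (by positivity)
  have hδ1 : ε ^ 2 ≤ δ := le_max_left _ _
  have hδ2 : ε ^ (j + 1 + 1) ≤ δ := le_max_right _ _
  have hCt : 0 < Real.sqrt (∑ m ∈ Finset.range (s + 1), A m) + 1 := by positivity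
  have hus : Sol (0 + 1) T u := sol_of hu.1 (fun t ht x => by
    have := hu.2 t ht x
    simpa using this)
  have hUs : Sol (j + 1) T U := sol_of hU.1 hU.2
  have hne : Nonempty (Set.Icc (0:ℝ) T) := ⟨⟨0, le_rfl, hT.le⟩⟩
  by_cases hb : BddAbove (Set.range fun t : Set.Icc (0 : ℝ) T =>
      linfNorm (fun x => u (t : ℝ) x - U (t : ℝ) x))
  · obtain ⟨K, hK⟩ := hb
    have hwK : ∀ t ∈ Set.Icc 0 T, ∀ x, |u t x - U t x| ≤ K := fun t ht x =>
      (abs_le_linf u U t x).trans (hK ⟨⟨t, ht⟩, rfl⟩)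
    have hur : ∀ N, ∃ M, ∀ t ∈ Set.Icc 0 T, HH u N t ≤ M := fun N => regularity hus (Or.inr rfl) N
    have hUr : ∀ N, ∃ M, ∀ t ∈ Set.Icc 0 T, HH U N t ≤ M := by
      obtain ⟨M, hM⟩ := hur 1
      refine fun N => regularity hUs (Or.inl ⟨Real.sqrt M + K, fun t ht x => ?_⟩) N
      have h1 : |VV u 0 t x| ≤ Real.sqrt M :=
        Real.abs_le_sqrt ((VV_sup u (le_refl 1) t x).trans (hM t ht))
      have h2 := hwK t ht x
      rw [← VV_zero u t x, ← VV_zero U t x] at h2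
      have h3 : VV U 0 t x = VV u 0 t x - (VV u 0 t x - VV U 0 t x) := by ring
      rw [h3]
      exact (abs_sub _ _).trans (add_le_add h1 h2)
    have hnU : 0 ≤ hNorm (s + 1) (⇑(U 0)) := Real.sqrt_nonneg _
    have hnu : 0 ≤ hNorm (s + 1) (⇑(u 0)) := Real.sqrt_nonneg _
    have bu : ∀ t ∈ Set.Icc 0 T, HH u (s + 1) t ≤ 4 * (c₀ * ε) ^ 2 := by
      intro t ht
      refine (init_bound hT hnu hD1 hloc1 hus (hur _) (hNorm_eq _ _ _) (hTs.trans ?_) t ht).trans ?_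
      · refine mul_le_mul (min_le_left _ _) ?_ (by positivity) (by positivity)
        rw [zero_add, pow_one]
        exact min_le_right _ _
      · gcongr
    have bU : ∀ t ∈ Set.Icc 0 T, HH U (s + 1) t ≤ 4 * (C₀ * ε) ^ 2 := by
      intro t ht
      refine (init_bound hT hnU hD2 hloc2 hUs (hUr _) (hNorm_eq _ _ _) (hTs.trans ?_) t ht).trans ?_
      · exact mul_le_mul (min_le_right _ _) (min_le_left _ _) (by positivity) (by positivity)
      · gcongr
    have bz : ∀ t ∈ Set.Icc 0 T, ∀ m ∈ Finset.range (s + 1), zz u U m t ≤ A m * δ ^ 2 := by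
      intro t ht m hm
      have hm' : m ≤ s := by have := Finset.mem_range.1 hm; omega
      refine (diff_bound hT hus hUs (by omega) (by omega) bu bU t ht).trans ?_
      have h0 : zz u U m 0 ≤ C ^ 2 * δ ^ 2 := by
        refine (zz_le s u U hm' 0).trans ?_
        rw [← mul_pow]
        exact pow_le_pow_left₀ (Real.sqrt_nonneg _) hw0 2
      have h1 : (4 * (c₀ * ε) ^ 2) ^ (0 + 1 + 1) ≤ (4 * c₀ ^ 2) ^ (0 + 1 + 1) * δ ^ 2 := by
        calc (4 * (c₀ * ε) ^ 2) ^ (0 + 1 + 1) = (4 * c₀ ^ 2) ^ (0 + 1 + 1) * (ε ^ 2) ^ 2 := by ring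
          _ ≤ _ := by gcongr
      have h2 : (4 * (C₀ * ε) ^ 2) ^ (j + 1 + 1) ≤ (4 * C₀ ^ 2) ^ (j + 1 + 1) * δ ^ 2 := by
        calc (4 * (C₀ * ε) ^ 2) ^ (j + 1 + 1)
            = (4 * C₀ ^ 2) ^ (j + 1 + 1) * (ε ^ (j + 1 + 1)) ^ 2 := by
              rw [mul_pow C₀ ε 2, ← mul_assoc, mul_pow _ (ε ^ 2), ← pow_mul, ← pow_mul, mul_comm 2]
          _ ≤ _ := by gcongr
      calc _ ≤ 2 * (C ^ 2 * δ ^ 2 + 2 * T ^ 2 *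
              (2 * ((2 + 2 * 4 ^ (RL (0 + 1) m).length) * ((4 * c₀ ^ 2) ^ (0 + 1 + 1) * δ ^ 2))
              + 2 * ((2 + 2 * 4 ^ (RL (j + 1) m).length) *
                ((4 * C₀ ^ 2) ^ (j + 1 + 1) * δ ^ 2)))) := by gcongr
        _ = A m * δ ^ 2 := by rw [hA]; ring
    have bh : ∀ t : Set.Icc (0 : ℝ) T, hNorm s (fun x => u (t : ℝ) x - U (t : ℝ) x) ≤
        (Real.sqrt (∑ m ∈ Finset.range (s + 1), A m) + 1) * δ := by
      intro t
      rw [hNorm_diff]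
      calc Real.sqrt (∑ n ∈ Finset.range (s + 1), zz u U n t)
          ≤ Real.sqrt ((∑ m ∈ Finset.range (s + 1), A m) * δ ^ 2) := by
            apply Real.sqrt_le_sqrt
            rw [Finset.sum_mul]
            exact Finset.sum_le_sum (bz t t.2)
        _ = Real.sqrt (∑ m ∈ Finset.range (s + 1), A m) * δ := by
            rw [Real.sqrt_mul' _ (sq_nonneg δ), Real.sqrt_sq hδ0.le]
        _ ≤ _ := by gcongr; linarith
    exact ⟨ciSup_le bh, ciSup_le fun t => (linf_le hs u U t).trans (bh t)⟩
  · have hb2 : ¬ BddAbove (Set.range fun t : Set.Icc (0 : ℝ) T =>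
        hNorm s (fun x => u (t : ℝ) x - U (t : ℝ) x)) := by
      rintro ⟨K, hK⟩
      refine hb ⟨K, ?_⟩
      rintro _ ⟨t, rfl⟩
      exact (linf_le hs u U t).trans (hK ⟨t, rfl⟩)
    rw [Real.iSup_of_not_bddAbove hb, Real.iSup_of_not_bddAbove hb2]
    exact ⟨by positivity, by positivity⟩
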